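/- Smallness of the potential on a dyadically long cone truncation: there exists an absolute constant C > 0 such that the following holds. Let u be a classical solution of ∂ₜₜu − Δu = −f(u) on an interval J = [t₁,t₂] with t₁ > 0, with energy E and a priori bound sup_{t∈J} ‖u(t,·)‖_{H̃²(ℝ³)} ≤ M. Let η > 0 satisfy η ≤ min(1, E^{1/18}), and assume [ t₁, t₁·( E·η^{−18} )^{4·E·η^{−18}} ] ⊆ J. Then there exists a subinterval J' = [t₁', t₂'] ⊆ J with t₂'/t₁' = E·η^{−18} and ‖u‖_{L^∞ₜL⁶ₓ(Γ₊(J'))} ≤ C·η. -/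

import Mathlib

open MeasureTheory Set

noncomputable section

abbrev Space : Type := EuclideanSpace ℝ (Fin 3)

/-- The loglog weight `g(u) = (log log (10 + u²))^c`. -/
def g (c u : ℝ) : ℝ := Real.log (Real.log (10 + u ^ 2)) ^ c

/-- The nonlinearity `f(u) = u⁵ g(u)`. -/
def f (c u : ℝ) : ℝ := u ^ 5 * g c u

/-- The potential `F(u) = ∫₀ᵘ f(v) dv`. -/
def Fpot (c u : ℝ) : ℝ := ∫ v in (0:ℝ)..u, f c v

/-- First time derivative `∂ₜ u`. -/
def dt1 (u : ℝ → Space → ℝ) (t : ℝ) (x : Space) : ℝ := deriv (fun s => u s x) t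

/-- Second time derivative `∂ₜₜ u`. -/
def dt2 (u : ℝ → Space → ℝ) (t : ℝ) (x : Space) : ℝ := deriv (fun s => dt1 u s x) t

/-- The spatial Laplacian. -/
def lap (h : Space → ℝ) (x : Space) : ℝ :=
  ∑ i : Fin 3, fderiv ℝ (fun y => fderiv ℝ h y (EuclideanSpace.single i 1)) x
    (EuclideanSpace.single i 1)

/-- A classical solution of `∂ₜₜ u - Δ u = -f(u)` on the time interval `J`:
infinitely differentiable, compactly supported in space for each fixed time,
and satisfying the equation. -/
structure IsClassicalSol (c : ℝ) (J : Set ℝ) (u : ℝ → Space → ℝ) : Prop where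
  smooth : ContDiffOn ℝ (⊤ : ℕ∞) (fun p : ℝ × Space => u p.1 p.2) (J ×ˢ (Set.univ : Set Space))
  compactSpt : ∀ t ∈ J, HasCompactSupport (u t)
  eqn : ∀ t ∈ J, ∀ x : Space, dt2 u t x - lap (u t) x = - f c (u t x)

/-- The conserved energy. -/
def energy (c : ℝ) (u : ℝ → Space → ℝ) (t : ℝ) : ℝ :=
  (1/2) * (∫ x : Space, (dt1 u t x) ^ 2)
    + (1/2) * (∫ x : Space, ‖gradient (u t) x‖ ^ 2)
    + ∫ x : Space, Fpot c (u t x)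

/-- Spatial `L^r` norm. -/
def LxNorm (r : ℝ) (h : Space → ℝ) : ℝ := (∫ x : Space, |h x| ^ r) ^ (1 / r)

/-- Mixed norm `L^q_t L^r_x (J × ℝ³)`. -/
def LtLxNorm (q r : ℝ) (J : Set ℝ) (u : ℝ → Space → ℝ) : ℝ :=
  (∫ t in J, (LxNorm r (u t)) ^ q) ^ (1 / q)

/-- The homogeneous `H̃² = Ḣ² ∩ Ḣ¹` norm. -/
def H2tildeNorm (h : Space → ℝ) : ℝ :=
  (∫ x : Space, ‖iteratedFDeriv ℝ 2 h x‖ ^ 2) ^ ((1:ℝ)/2)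
    + (∫ x : Space, ‖gradient h x‖ ^ 2) ^ ((1:ℝ)/2)

/-- The inhomogeneous `H¹` norm. -/
def H1Norm (h : Space → ℝ) : ℝ :=
  (∫ x : Space, (h x) ^ 2) ^ ((1:ℝ)/2)
    + (∫ x : Space, ‖gradient h x‖ ^ 2) ^ ((1:ℝ)/2)

/-- Spatial `L^r` norm restricted to the interior of the light cone at time `t`,
i.e. the norm of `h · 1_{|x| < t}`. -/
def LxConeNorm (r t : ℝ) (h : Space → ℝ) : ℝ :=
  (∫ x in Metric.ball (0:Space) t, |h x| ^ r) ^ (1 / r)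

/-- Mixed norm `L^q_t L^r_x (Γ₊(J))` on the truncated forward light cone. -/
def LtLxConeNorm (q r : ℝ) (J : Set ℝ) (u : ℝ → Space → ℝ) : ℝ :=
  (∫ t in J, (LxConeNorm r t (u t)) ^ q) ^ (1 / q)

/-- The local energy `e(t)` (integral over the ball `|x| ≤ t`). -/
def locEnergy (c : ℝ) (u : ℝ → Space → ℝ) (t : ℝ) : ℝ :=
  (1/2) * (∫ x in Metric.closedBall (0:Space) t, (dt1 u t x) ^ 2)
    + (1/2) * (∫ x in Metric.closedBall (0:Space) t, ‖gradient (u t) x‖ ^ 2)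
    + ∫ x in Metric.closedBall (0:Space) t, Fpot c (u t x)

/-!
The energy inside a light cone can only grow in time, the growth being the flux through the
boundary of the cone. The multiplier `t∂ₜu + x·∇u + u` yields a second charge, which dominates `t`
times the potential energy in the cone, and whose interior source term has a favourable sign
because `4F(v) ≤ vF'(v)`; its boundary term is controlled by the energy flux. Hence the potential
energy at time `T` is at most a constant multiple of `(a/T) E` plus the increment of the cone energy
over `[a, T]`, up to an error coming from the undifferentiated terms in `u`. Among about
`A = E η⁻¹⁸` consecutive scales of ratio `A²`, one must have energy increment at most `E/A = η¹⁸`,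
and on the second half `[aA, aA²]` of such a scale `[a, aA²]` the factor `a/T ≤ 1/A` makes the
first term just as small.

The sharp cone is replaced by a smooth cutoff in `t² - |x|²`, and `u` is delayed by `t₁` so that the
cutoff equals `1` on the original cone. The spatial supports of `u` are not assumed to be bounded
locally uniformly in time, so the full energy cannot be differentiated; the cone energy is compared
with it by a Baire category argument.
-/

open Filter Topology

/-! ### Space-time calculus -/

section Calculus

variable {E : Type*} [NormedAddCommGroup E] {I : Set ℝ} {t : ℝ}

/-- The spatial support of `h` stays in one fixed ball for all times near `t`; this is what
justifies differentiation under, and integration by parts in, the spatial integral. -/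
def SupportBoundedNear (t : ℝ) (h : ℝ × E → ℝ) : Prop :=
  ∃ R, ∀ᶠ s in 𝓝 t, ∀ x, R < ‖x‖ → h (s, x) = 0

namespace SupportBoundedNear

lemma hasCompactSupport [ProperSpace E] {h : ℝ × E → ℝ} (hs : SupportBoundedNear t h) :
    HasCompactSupport fun x => h (t, x) := by
  obtain ⟨R, hR⟩ := hs
  exact .intro (isCompact_closedBall 0 R) fun x hx => hR.self_of_nhds x (by simpa using hx)

lemma mul_right {h : ℝ × E → ℝ} (hs : SupportBoundedNear t h) (k : ℝ × E → ℝ) :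
    SupportBoundedNear t fun p => h p * k p := by
  obtain ⟨R, hR⟩ := hs
  exact ⟨R, hR.mono fun s hs x hx => mul_eq_zero_of_left (hs x hx) _⟩

lemma fderiv_apply [NormedSpace ℝ E] {h : ℝ × E → ℝ} (hs : SupportBoundedNear t h)
    (v : ℝ × E) : SupportBoundedNear t fun p => fderiv ℝ h p v := by
  obtain ⟨R, hR⟩ := hs
  refine ⟨R, hR.eventually_nhds.mono fun s hs x hx => ?_⟩
  have h_zero : h =ᶠ[𝓝 (s, x)] fun _ => 0 := by
    rw [nhds_prod_eq]
    filter_upwards [hs.prod_mk (continuous_norm.continuousAt.eventually_const_lt hx)] with q hq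
    exact hq.1 _ hq.2
  simp [h_zero.fderiv_eq]

end SupportBoundedNear

lemma continuous_slice {h : ℝ × E → ℝ} (hh : ContinuousOn h (I ×ˢ univ)) (ht : t ∈ I) :
    Continuous fun x => h (t, x) :=
  hh.comp_continuous (Continuous.prodMk_right t) fun _ => ⟨ht, mem_univ _⟩

lemma integrable_slice [ProperSpace E] [MeasurableSpace E] [BorelSpace E] {μ : Measure E}
    [IsFiniteMeasureOnCompacts μ] {h : ℝ × E → ℝ} (hh : ContinuousOn h (I ×ˢ univ))
    (ht : t ∈ I) (hs : SupportBoundedNear t h) : Integrable (fun x => h (t, x)) μ :=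
  (continuous_slice hh ht).integrable_of_hasCompactSupport hs.hasCompactSupport

variable [NormedSpace ℝ E]

/-- The time derivative `∂ₜh` of a function on space-time `ℝ × E`. -/
def timeDeriv (h : ℝ × E → ℝ) (p : ℝ × E) : ℝ := fderiv ℝ h p (1, 0)

lemma differentiableAt_of_slab {h : ℝ × E → ℝ} {n : WithTop ℕ∞} (hn : n ≠ 0) (hI : IsOpen I)
    (hh : ContDiffOn ℝ n h (I ×ˢ univ)) (ht : t ∈ I) (x : E) : DifferentiableAt ℝ h (t, x) :=
  (hh.differentiableOn hn).differentiableAt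
    ((hI.prod isOpen_univ).mem_nhds ⟨ht, mem_univ x⟩)

lemma contDiffOn_fderiv_apply {h : ℝ × E → ℝ} {m n : WithTop ℕ∞} (hmn : m + 1 ≤ n)
    (hI : IsOpen I) (hh : ContDiffOn ℝ n h (I ×ˢ univ)) (v : ℝ × E) :
    ContDiffOn ℝ m (fun p => fderiv ℝ h p v) (I ×ˢ univ) :=
  (hh.fderiv_of_isOpen (hI.prod isOpen_univ) hmn).clm_apply contDiffOn_const

lemma contDiffOn_timeDeriv {h : ℝ × E → ℝ} {m n : WithTop ℕ∞} (hmn : m + 1 ≤ n)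
    (hI : IsOpen I) (hh : ContDiffOn ℝ n h (I ×ˢ univ)) :
    ContDiffOn ℝ m (timeDeriv h) (I ×ˢ univ) :=
  contDiffOn_fderiv_apply hmn hI hh _

lemma hasDerivAt_slice {h : ℝ × E → ℝ} {x : E} (hh : DifferentiableAt ℝ h (t, x)) :
    HasDerivAt (fun s => h (s, x)) (timeDeriv h (t, x)) t :=
  hh.hasFDerivAt.comp_hasDerivAt t ((hasDerivAt_id t).prodMk (hasDerivAt_const t x))

lemma fderiv_slice_apply {h : ℝ × E → ℝ} {x : E} (hh : DifferentiableAt ℝ h (t, x)) (v : E) :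
    fderiv ℝ (fun y => h (t, y)) x v = fderiv ℝ h (t, x) (0, v) := by
  have h_slice : HasFDerivAt (fun y => h (t, y)) _ x :=
    hh.hasFDerivAt.comp x (hasFDerivAt_prodMk_right t x)
  rw [h_slice.fderiv]
  rfl

lemma fderiv_comp_real_apply {F : ℝ → ℝ} {h : E → ℝ} {x : E}
    (hF : DifferentiableAt ℝ F (h x)) (hh : DifferentiableAt ℝ h x) (v : E) :
    fderiv ℝ (fun y => F (h y)) x v = deriv F (h x) * fderiv ℝ h x v := by
  have h_chain : HasFDerivAt (fun y => F (h y)) _ x :=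
    hF.hasDerivAt.comp_hasFDerivAt x hh.hasFDerivAt
  rw [h_chain.fderiv]
  rfl

theorem hasDerivAt_integral_slice [ProperSpace E] [MeasurableSpace E] [BorelSpace E]
    {μ : Measure E} [IsFiniteMeasureOnCompacts μ] {h : ℝ × E → ℝ} (hI : IsOpen I)
    (hh : ContDiffOn ℝ 1 h (I ×ˢ univ)) (ht : t ∈ I) (hs : SupportBoundedNear t h) :
    HasDerivAt (fun s => ∫ x, h (s, x) ∂μ) (∫ x, timeDeriv h (t, x) ∂μ) t := by
  have hh' : ContinuousOn (timeDeriv h) (I ×ˢ univ) :=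
    (contDiffOn_timeDeriv (m := 0) (zero_add _).le hI hh).continuousOn
  obtain ⟨R, hR⟩ := hs.fderiv_apply (1, 0)
  obtain ⟨δ, hδ, h_ball⟩ := Metric.nhds_basis_closedBall.mem_iff.1
    (inter_mem (hI.mem_nhds ht) hR)
  obtain ⟨C, hC⟩ := ((isCompact_closedBall t δ).prod (isCompact_closedBall (0 : E) R))
    |>.exists_bound_of_continuousOn
      (hh'.mono (prod_mono (fun s hs => (h_ball hs).1) (subset_univ _)))
  refine (hasDerivAt_integral_of_dominated_loc_of_deriv_le (F := fun s x => h (s, x))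
    (F' := fun s x => timeDeriv h (s, x))
    (bound := (Metric.closedBall (0 : E) R).indicator fun _ => C)
    (Metric.closedBall_mem_nhds t hδ) ?_ (integrable_slice hh.continuousOn ht hs)
    (continuous_slice hh' ht).aestronglyMeasurable ?_ ?_ ?_).2
  · filter_upwards [hI.mem_nhds ht] with s hs
    exact (continuous_slice hh.continuousOn hs).aestronglyMeasurable
  · refine .of_forall fun x s hs => ?_
    by_cases hx : x ∈ Metric.closedBall (0 : E) R
    · simpa only [indicator_of_mem hx] using hC (s, x) ⟨hs, hx⟩
    · simp [indicator_of_notMem hx, timeDeriv, (h_ball hs).2 x (by simpa using hx)]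
  · exact (integrable_indicator_iff Metric.isClosed_closedBall.measurableSet).2
      (integrableOn_const measure_closedBall_lt_top.ne)
  · exact .of_forall fun x s hs =>
      hasDerivAt_slice (differentiableAt_of_slab one_ne_zero hI hh (h_ball hs).1 x)

end Calculus

section Divergence

variable {ι : Type*} {I : Set ℝ} {t : ℝ}

lemma fderiv_coord_apply [Finite ι] (i : ι) (p v : ℝ × EuclideanSpace ℝ ι) :
    fderiv ℝ (fun q : ℝ × EuclideanSpace ℝ ι => q.2 i) p v = v.2 i := by
  have := Fintype.ofFinite ι
  have h_linear : HasFDerivAt (fun q : ℝ × EuclideanSpace ℝ ι => q.2 i) _ p :=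
    (EuclideanSpace.proj (𝕜 := ℝ) i ∘L .snd ℝ ℝ (EuclideanSpace ℝ ι)).hasFDerivAt
  rw [h_linear.fderiv]
  rfl

variable [Fintype ι] [DecidableEq ι]

/-- The `i`-th spatial derivative `∂ᵢh` of a function on space-time `ℝ × ℝⁿ`. -/
def spaceDeriv (i : ι) (h : ℝ × EuclideanSpace ℝ ι → ℝ) (p : ℝ × EuclideanSpace ℝ ι) : ℝ :=
  fderiv ℝ h p (0, EuclideanSpace.single i 1)

lemma contDiffOn_spaceDeriv {h : ℝ × EuclideanSpace ℝ ι → ℝ} {m n : WithTop ℕ∞}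
    (hmn : m + 1 ≤ n) (hI : IsOpen I) (hh : ContDiffOn ℝ n h (I ×ˢ univ)) (i : ι) :
    ContDiffOn ℝ m (spaceDeriv i h) (I ×ˢ univ) :=
  contDiffOn_fderiv_apply hmn hI hh _

lemma integrable_spaceDeriv {h : ℝ × EuclideanSpace ℝ ι → ℝ} (hI : IsOpen I)
    (hh : ContDiffOn ℝ 1 h (I ×ˢ univ)) (ht : t ∈ I) (hs : SupportBoundedNear t h) (i : ι) :
    Integrable fun x => spaceDeriv i h (t, x) :=
  integrable_slice (contDiffOn_spaceDeriv (m := 0) (zero_add _).le hI hh i).continuousOn ht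
    (hs.fderiv_apply _)

lemma integral_spaceDeriv_eq_zero {h : ℝ × EuclideanSpace ℝ ι → ℝ} (hI : IsOpen I)
    (hh : ContDiffOn ℝ 1 h (I ×ˢ univ)) (ht : t ∈ I) (hs : SupportBoundedNear t h) (i : ι) :
    ∫ x, spaceDeriv i h (t, x) = 0 := by
  have hd := differentiableAt_of_slab one_ne_zero hI hh ht
  have h_int := integrable_spaceDeriv hI hh ht hs i
  simp only [spaceDeriv, ← fderiv_slice_apply (hd _)] at h_int ⊢
  simpa using integral_mul_fderiv_eq_neg_fderiv_mul_of_integrable (μ := volume)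
    (f := fun _ => (1 : ℝ)) (g := fun y => h (t, y)) (v := EuclideanSpace.single i 1)
    (by simp) (by simpa using h_int) (by simpa using integrable_slice hh.continuousOn ht hs)
    (fun x _ => differentiableAt_const 1) fun x _ =>
      (hd x).comp x (hasFDerivAt_prodMk_right t x).differentiableAt

theorem hasDerivAt_integral_of_divergence {H : ℝ × EuclideanSpace ℝ ι → ℝ}
    {X : ι → ℝ × EuclideanSpace ℝ ι → ℝ} (hI : IsOpen I) (ht : t ∈ I)
    (hH : ContDiffOn ℝ 1 H (I ×ˢ univ)) (hX : ∀ i, ContDiffOn ℝ 1 (X i) (I ×ˢ univ))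
    (hHs : SupportBoundedNear t H) (hXs : ∀ i, SupportBoundedNear t (X i)) :
    HasDerivAt (fun s => ∫ x, H (s, x))
      (∫ x, (timeDeriv H (t, x) - ∑ i, spaceDeriv i (X i) (t, x))) t := by
  have h_int : Integrable fun x => timeDeriv H (t, x) :=
    integrable_slice (contDiffOn_timeDeriv (m := 0) (zero_add _).le hI hH).continuousOn ht
      (hHs.fderiv_apply _)
  have h_intX i := integrable_spaceDeriv hI (hX i) ht (hXs i) i
  rw [integral_sub h_int (integrable_finsetSum _ fun i _ => h_intX i),
    integral_finsetSum _ fun i _ => h_intX i,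
    Finset.sum_eq_zero fun i _ => integral_spaceDeriv_eq_zero hI (hX i) ht (hXs i) i, sub_zero]
  exact hasDerivAt_integral_slice hI hH ht hHs

end Divergence

/-! ### A smooth cutoff to the light cone -/

section ConeCutoff

variable {ι : Type*} [Fintype ι] {ε : ℝ}

/-- A smooth substitute for the indicator of the cone `|x| < |t|`: it vanishes outside the cone
and equals `1` where `ε ≤ t² - |x|²`. Being a function of `t² - |x|²`, it is smooth and its
gradient is proportional to `(t, -x)`. -/
def coneCutoff (ε : ℝ) (p : ℝ × EuclideanSpace ℝ ι) : ℝ :=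
  Real.smoothTransition ((p.1 ^ 2 - ‖p.2‖ ^ 2) / ε)

/-- The derivative of `coneCutoff ε` in the variable `t² - |x|²`, a smooth substitute for surface
measure on the cone. -/
def shellWeight (ε : ℝ) (p : ℝ × EuclideanSpace ℝ ι) : ℝ :=
  deriv Real.smoothTransition ((p.1 ^ 2 - ‖p.2‖ ^ 2) / ε) / ε

lemma coneCutoff_nonneg (p : ℝ × EuclideanSpace ℝ ι) : 0 ≤ coneCutoff ε p :=
  Real.smoothTransition.nonneg _

lemma coneCutoff_le_one (p : ℝ × EuclideanSpace ℝ ι) : coneCutoff ε p ≤ 1 :=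
  Real.smoothTransition.le_one _

lemma coneCutoff_eq_zero (hε : 0 ≤ ε) {p : ℝ × EuclideanSpace ℝ ι} (hp : |p.1| ≤ ‖p.2‖) :
    coneCutoff ε p = 0 :=
  Real.smoothTransition.zero_of_nonpos <| div_nonpos_of_nonpos_of_nonneg
    (sub_nonpos.2 (sq_le_sq.2 (hp.trans (le_abs_self _)))) hε

lemma coneCutoff_eq_one (hε : 0 < ε) {p : ℝ × EuclideanSpace ℝ ι}
    (hp : ε ≤ p.1 ^ 2 - ‖p.2‖ ^ 2) : coneCutoff ε p = 1 :=
  Real.smoothTransition.one_of_one_le ((one_le_div₀ hε).2 hp)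

lemma shellWeight_nonneg (hε : 0 ≤ ε) (p : ℝ × EuclideanSpace ℝ ι) : 0 ≤ shellWeight ε p :=
  div_nonneg Real.smoothTransition.monotone.deriv_nonneg hε

lemma shellWeight_eq_zero_of_abs_le (hε : 0 ≤ ε) {p : ℝ × EuclideanSpace ℝ ι}
    (hp : |p.1| ≤ ‖p.2‖) : shellWeight ε p = 0 := by
  have h_min : IsMinOn Real.smoothTransition univ ((p.1 ^ 2 - ‖p.2‖ ^ 2) / ε) := fun y _ =>
    (coneCutoff_eq_zero hε hp).trans_le (Real.smoothTransition.nonneg y)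
  rw [shellWeight, (h_min.isLocalMin univ_mem).deriv_eq_zero, zero_div]

lemma shellWeight_eq_zero_of_le (hε : 0 < ε) {p : ℝ × EuclideanSpace ℝ ι}
    (hp : ε ≤ p.1 ^ 2 - ‖p.2‖ ^ 2) : shellWeight ε p = 0 := by
  have h_max : IsMaxOn Real.smoothTransition univ ((p.1 ^ 2 - ‖p.2‖ ^ 2) / ε) := fun y _ =>
    (Real.smoothTransition.le_one y).trans_eq (coneCutoff_eq_one hε hp).symm
  rw [shellWeight, (h_max.isLocalMax univ_mem).deriv_eq_zero, zero_div]

lemma shellWeight_mul_le_shellWeight_mul {t a b : ℝ} {x : EuclideanSpace ℝ ι} (hε : 0 ≤ ε)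
    (ht : 0 ≤ t) (hab : ‖x‖ ≤ t → a ≤ b) :
    shellWeight ε (t, x) * a ≤ shellWeight ε (t, x) * b := by
  rcases le_total ‖x‖ t with hx | hx
  · exact mul_le_mul_of_nonneg_left (hab hx) (shellWeight_nonneg hε _)
  · simp [shellWeight_eq_zero_of_abs_le (p := (t, x)) hε (by rwa [abs_of_nonneg ht])]

lemma coneCutoff_mul_le_coneCutoff_mul {t a b : ℝ} {x : EuclideanSpace ℝ ι} (hε : 0 ≤ ε)
    (ht : 0 ≤ t) (hab : ‖x‖ ≤ t → a ≤ b) :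
    coneCutoff ε (t, x) * a ≤ coneCutoff ε (t, x) * b := by
  rcases le_total ‖x‖ t with hx | hx
  · exact mul_le_mul_of_nonneg_left (hab hx) (coneCutoff_nonneg _)
  · simp [coneCutoff_eq_zero (p := (t, x)) hε (by rwa [abs_of_nonneg ht])]

lemma contDiff_coneCutoff (n : ℕ∞) : ContDiff ℝ n (coneCutoff (ι := ι) ε) :=
  Real.smoothTransition.contDiff.comp
    (((contDiff_fst.pow 2).sub (contDiff_snd.norm_sq ℝ)).div_const ε)

lemma continuous_shellWeight : Continuous (shellWeight (ι := ι) ε) :=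
  ((Real.smoothTransition.contDiff (n := 1)).continuous_deriv le_rfl).comp
    (by fun_prop : Continuous fun p : ℝ × EuclideanSpace ℝ ι => (p.1 ^ 2 - ‖p.2‖ ^ 2) / ε)
    |>.div_const ε

lemma fderiv_coneCutoff_apply (p v : ℝ × EuclideanSpace ℝ ι) :
    fderiv ℝ (coneCutoff ε) p v = 2 * shellWeight ε p * (p.1 * v.1 - inner ℝ p.2 v.2) := by
  have h_quad : HasFDerivAt (fun q : ℝ × EuclideanSpace ℝ ι => (q.1 ^ 2 - ‖q.2‖ ^ 2) / ε) _ p :=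
    ((hasFDerivAt_fst.pow 2).sub hasFDerivAt_snd.norm_sq).mul_const ε⁻¹
  have h_chain : HasFDerivAt (coneCutoff ε) _ p :=
    ((Real.smoothTransition.contDiff (n := 1)).differentiable one_ne_zero _).hasDerivAt
      |>.comp_hasFDerivAt p h_quad
  rw [h_chain.fderiv, shellWeight]
  simp
  ring

lemma timeDeriv_coneCutoff (p : ℝ × EuclideanSpace ℝ ι) :
    timeDeriv (coneCutoff ε) p = 2 * shellWeight ε p * p.1 := by
  simp [timeDeriv, fderiv_coneCutoff_apply]

lemma spaceDeriv_coneCutoff [DecidableEq ι] (i : ι) (p : ℝ × EuclideanSpace ℝ ι) :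
    spaceDeriv i (coneCutoff ε) p = -(2 * shellWeight ε p * p.2 i) := by
  simp [spaceDeriv, fderiv_coneCutoff_apply, EuclideanSpace.inner_single_right]

lemma supportBoundedNear_coneCutoff (hε : 0 ≤ ε) (t : ℝ) :
    SupportBoundedNear t (coneCutoff (ι := ι) ε) :=
  ⟨|t| + 1, (continuous_abs.continuousAt.eventually_lt_const (lt_add_one |t|)).mono
    fun _ hs _ hx => coneCutoff_eq_zero hε (hs.trans hx).le⟩

lemma integrable_coneCutoff_mul (hε : 0 ≤ ε) (t : ℝ) {G : EuclideanSpace ℝ ι → ℝ}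
    (hG : Continuous G) : Integrable fun x => coneCutoff ε (t, x) * G x :=
  (((contDiff_coneCutoff 0).continuous.comp (by fun_prop)).mul hG).integrable_of_hasCompactSupport
    (supportBoundedNear_coneCutoff hε t).hasCompactSupport.mul_right

lemma integrable_shellWeight_mul (hε : 0 ≤ ε) (t : ℝ) {G : EuclideanSpace ℝ ι → ℝ}
    (hG : Continuous G) : Integrable fun x => shellWeight ε (t, x) * G x :=
  ((continuous_shellWeight.comp (by fun_prop)).mul hG).integrable_of_hasCompactSupport <|
    .intro (isCompact_closedBall 0 |t|) fun x hx => mul_eq_zero_of_left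
      (shellWeight_eq_zero_of_abs_le hε (by simpa using (not_le.1 (by simpa using hx)).le)) _

lemma integrable_coneCutoff (hε : 0 ≤ ε) (t : ℝ) :
    Integrable fun x : EuclideanSpace ℝ ι => coneCutoff ε (t, x) := by
  simpa using integrable_coneCutoff_mul hε t (continuous_const (y := 1))

lemma integrable_shellWeight (hε : 0 ≤ ε) (t : ℝ) :
    Integrable fun x : EuclideanSpace ℝ ι => shellWeight ε (t, x) := by
  simpa using integrable_shellWeight_mul hε t (continuous_const (y := 1))

lemma timeDeriv_coneCutoff_mul {h : ℝ × EuclideanSpace ℝ ι → ℝ} {p : ℝ × EuclideanSpace ℝ ι}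
    (hh : DifferentiableAt ℝ h p) :
    timeDeriv (fun q => coneCutoff ε q * h q) p =
      coneCutoff ε p * timeDeriv h p + 2 * shellWeight ε p * p.1 * h p := by
  rw [← timeDeriv_coneCutoff, timeDeriv,
    fderiv_fun_mul ((contDiff_coneCutoff 1).differentiable one_ne_zero p) hh, mul_comm _ (h p)]
  rfl

lemma spaceDeriv_coneCutoff_mul [DecidableEq ι] {h : ℝ × EuclideanSpace ℝ ι → ℝ}
    {p : ℝ × EuclideanSpace ℝ ι} (hh : DifferentiableAt ℝ h p) (i : ι) :
    spaceDeriv i (fun q => coneCutoff ε q * h q) p =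
      coneCutoff ε p * spaceDeriv i h p - 2 * shellWeight ε p * p.2 i * h p := by
  rw [sub_eq_add_neg, ← neg_mul, ← spaceDeriv_coneCutoff, spaceDeriv,
    fderiv_fun_mul ((contDiff_coneCutoff 1).differentiable one_ne_zero p) hh, mul_comm _ (h p)]
  rfl

theorem hasDerivAt_integral_coneCutoff_mul [DecidableEq ι] {I : Set ℝ} {t : ℝ} (hε : 0 ≤ ε)
    (hI : IsOpen I) (ht : t ∈ I) {H : ℝ × EuclideanSpace ℝ ι → ℝ}
    {X : ι → ℝ × EuclideanSpace ℝ ι → ℝ} (hH : ContDiffOn ℝ 1 H (I ×ˢ univ))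
    (hX : ∀ i, ContDiffOn ℝ 1 (X i) (I ×ˢ univ)) :
    HasDerivAt (fun s => ∫ x, coneCutoff ε (s, x) * H (s, x))
      (∫ x, (2 * (shellWeight ε (t, x) * (t * H (t, x) + ∑ i, x i * X i (t, x)))
        + coneCutoff ε (t, x) *
          (timeDeriv H (t, x) - ∑ i, spaceDeriv i (X i) (t, x)))) t := by
  have hw : ContDiffOn ℝ 1 (coneCutoff (ι := ι) ε) (I ×ˢ univ) :=
    (contDiff_coneCutoff 1).contDiffOn
  have h_supp := supportBoundedNear_coneCutoff (ι := ι) hε t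
  convert hasDerivAt_integral_of_divergence hI ht (hw.mul hH) (fun i => hw.mul (hX i))
    (h_supp.mul_right H) (fun i => h_supp.mul_right (X i)) using 3 with x
  rw [timeDeriv_coneCutoff_mul (differentiableAt_of_slab one_ne_zero hI hH ht x)]
  simp only [spaceDeriv_coneCutoff_mul (differentiableAt_of_slab one_ne_zero hI (hX _) ht x),
    Finset.sum_sub_distrib, mul_assoc, ← Finset.mul_sum]
  ring

end ConeCutoff

/-! ### Volume of the cutoff cone -/

section Volume

variable {ε t : ℝ}

lemma integral_coneCutoff_le (hε : 0 ≤ ε) (ht : 0 ≤ t) :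
    ∫ x : Space, coneCutoff ε (t, x) ≤ 4 / 3 * Real.pi * t ^ 3 := by
  have h_vol : volume.real (Metric.closedBall (0 : Space) t) = 4 / 3 * Real.pi * t ^ 3 := by
    rw [measureReal_def, EuclideanSpace.volume_closedBall_fin_three, ← ENNReal.ofReal_pow ht,
      ← ENNReal.ofReal_mul (by positivity), ENNReal.toReal_ofReal (by positivity)]
    ring
  rw [← h_vol, ← integral_indicator_one measurableSet_closedBall]
  refine integral_mono (integrable_coneCutoff hε t)
    ((integrable_indicator_iff measurableSet_closedBall).2
      (integrableOn_const measure_closedBall_lt_top.ne)) fun x => ?_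
  by_cases hx : x ∈ Metric.closedBall (0 : Space) t
  · rw [indicator_of_mem hx]
    exact coneCutoff_le_one (t, x)
  · rw [indicator_of_notMem hx]
    refine (coneCutoff_eq_zero hε ?_).le
    simpa [abs_of_nonneg ht] using (not_le.1 (by simpa using hx)).le

lemma two_mul_integral_norm_sq_mul_shellWeight {ι : Type*} [Fintype ι] (hε : 0 ≤ ε) (t : ℝ) :
    2 * ∫ x : EuclideanSpace ℝ ι, shellWeight ε (t, x) * ‖x‖ ^ 2 =
      Fintype.card ι * ∫ x : EuclideanSpace ℝ ι, coneCutoff ε (t, x) := by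
  classical
  have h_deriv := hasDerivAt_integral_coneCutoff_mul (ι := ι) hε isOpen_univ (mem_univ t)
    (H := fun _ => 0) (X := fun i p => p.2 i) contDiffOn_const (fun i => by fun_prop)
  have h_zero := h_deriv.unique (by simpa using hasDerivAt_const t (0 : ℝ))
  have h_integrand (x : EuclideanSpace ℝ ι) :
      2 * (shellWeight ε (t, x) * (t * 0 + ∑ i, x i * x i)) + coneCutoff ε (t, x) *
        (timeDeriv (fun _ => 0) (t, x) - ∑ i : ι, spaceDeriv i (fun p => p.2 i) (t, x)) =
      2 * (shellWeight ε (t, x) * ‖x‖ ^ 2) - Fintype.card ι * (coneCutoff ε (t, x) * 1) := by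
    simp only [← pow_two, ← EuclideanSpace.real_norm_sq_eq]
    simp [timeDeriv, spaceDeriv, fderiv_coord_apply]
    ring
  rw [integral_congr_ae (.of_forall h_integrand), integral_sub
    ((integrable_shellWeight_mul hε t (by fun_prop)).const_mul 2)
    ((integrable_coneCutoff_mul hε t continuous_const).const_mul _),
    integral_const_mul, integral_const_mul] at h_zero
  simpa [sub_eq_zero] using h_zero

lemma integral_shellWeight_le (hε : 0 < ε) (ht : 0 < t) (hεt : 2 * ε ≤ t ^ 2) :
    ∫ x : Space, shellWeight ε (t, x) ≤ 4 * Real.pi * t := by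
  have h_shell (x : Space) :
      t ^ 2 * shellWeight ε (t, x) ≤ 2 * (shellWeight ε (t, x) * ‖x‖ ^ 2) := by
    have h_nonneg := shellWeight_nonneg hε.le (t, x)
    rcases le_or_gt ε (t ^ 2 - ‖x‖ ^ 2) with hx | hx
    · simp [shellWeight_eq_zero_of_le hε (p := (t, x)) hx]
    · nlinarith
  have h_int := integral_mono
    ((integrable_shellWeight hε.le t).const_mul (t ^ 2))
    ((integrable_shellWeight_mul hε.le t (by fun_prop)).const_mul 2) h_shell
  rw [integral_const_mul, integral_const_mul, two_mul_integral_norm_sq_mul_shellWeight hε.le,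
    Fintype.card_fin, Nat.cast_ofNat] at h_int
  have h_cone := integral_coneCutoff_le hε.le ht.le
  refine le_of_mul_le_mul_left ?_ (pow_pos ht 2)
  linarith

end Volume

/-! ### Energy and Morawetz identities -/

section Densities

variable {ι : Type*} [Fintype ι] [DecidableEq ι]

/-- The wave operator `□U = ∂ₜₜU - ΔU` on space-time. -/
def dalembertian (U : ℝ × EuclideanSpace ℝ ι → ℝ) (p : ℝ × EuclideanSpace ℝ ι) : ℝ :=
  timeDeriv (timeDeriv U) p - ∑ i, spaceDeriv i (spaceDeriv i U) p

/-- The squared length `|∇U|²` of the spatial gradient. -/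
def gradSq (U : ℝ × EuclideanSpace ℝ ι → ℝ) (p : ℝ × EuclideanSpace ℝ ι) : ℝ :=
  ∑ i, spaceDeriv i U p ^ 2

/-- The Euler derivative `x · ∇U`. -/
def eulerDeriv (U : ℝ × EuclideanSpace ℝ ι → ℝ) (p : ℝ × EuclideanSpace ℝ ι) : ℝ :=
  ∑ i, p.2 i * spaceDeriv i U p

/-- The energy density `½(∂ₜU)² + ½|∇U|² + F(U)`. -/
def energyDensity (F : ℝ → ℝ) (U : ℝ × EuclideanSpace ℝ ι → ℝ)
    (p : ℝ × EuclideanSpace ℝ ι) : ℝ :=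
  (timeDeriv U p ^ 2 + gradSq U p) / 2 + F (U p)

/-- The outward energy flux through the hyperboloids `t² - |x|² = const`, in the normalization
`t e + ∂ₜU (x · ∇U)` that arises from the conormal `(t, -x)`. -/
def coneFlux (F : ℝ → ℝ) (U : ℝ × EuclideanSpace ℝ ι → ℝ)
    (p : ℝ × EuclideanSpace ℝ ι) : ℝ :=
  p.1 * energyDensity F U p + timeDeriv U p * eulerDeriv U p

/-- The density of the charge attached to the multiplier `t∂ₜU + x·∇U + U`, up to the null
divergence `div(x U² / 2t)`, which makes `t · morawetzDensity` a sum of nonnegative terms inside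
the cone (`mul_morawetzDensity`). -/
def morawetzDensity (F : ℝ → ℝ) (U : ℝ × Space → ℝ) (p : ℝ × Space) : ℝ :=
  p.1 * energyDensity F U p + timeDeriv U p * eulerDeriv U p + U p * timeDeriv U p
    + (3 / 2 * U p ^ 2 + U p * eulerDeriv U p) * p.1⁻¹

/-- The flux matching `morawetzDensity`. -/
def morawetzFlux (F : ℝ → ℝ) (U : ℝ × Space → ℝ) (i : Fin 3) (p : ℝ × Space) : ℝ :=
  (p.1 * timeDeriv U p + eulerDeriv U p + U p) * spaceDeriv i U p
    + p.2 i * ((timeDeriv U p ^ 2 - gradSq U p) / 2 - F (U p)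
      + U p * timeDeriv U p * p.1⁻¹ - U p ^ 2 / 2 * p.1⁻¹ ^ 2)

theorem divergence_energy {F : ℝ → ℝ} {U : ℝ × EuclideanSpace ℝ ι → ℝ}
    {p : ℝ × EuclideanSpace ℝ ι} (hF : DifferentiableAt ℝ F (U p)) (hU : ContDiffAt ℝ 2 U p) :
    timeDeriv (energyDensity F U) p
        - ∑ i, spaceDeriv i (fun q => timeDeriv U q * spaceDeriv i U q) p =
      timeDeriv U p * (dalembertian U p + deriv F (U p)) := by
  have dU : DifferentiableAt ℝ U p := hU.differentiableAt two_ne_zero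
  have d2U : DifferentiableAt ℝ (fderiv ℝ U) p :=
    (hU.fderiv_right (m := 1) le_rfl).differentiableAt one_ne_zero
  have : DifferentiableAt ℝ (fun q => F (U q)) p := hF.comp p dU
  have h_symm := hU.isSymmSndFDerivAt (by simp)
  unfold energyDensity gradSq dalembertian timeDeriv spaceDeriv
  simp (disch := fun_prop) [div_eq_mul_inv, fderiv_fun_add, fderiv_fun_mul, fderiv_fun_sum,
    fderiv_fun_pow, fderiv_comp_real_apply hF dU, fderiv_clm_apply, h_symm.eq _ (1, 0),
    Finset.sum_add_distrib, mul_assoc, ← Finset.mul_sum]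
  ring

theorem divergence_morawetz {F : ℝ → ℝ} {U : ℝ × Space → ℝ} {p : ℝ × Space} (hp : p.1 ≠ 0)
    (hF : DifferentiableAt ℝ F (U p)) (hU : ContDiffAt ℝ 2 U p) :
    timeDeriv (morawetzDensity F U) p - ∑ i, spaceDeriv i (morawetzFlux F U i) p =
      (p.1 * timeDeriv U p + eulerDeriv U p + U p) * (dalembertian U p + deriv F (U p))
        - (U p * deriv F (U p) - 4 * F (U p)) := by
  have dU : DifferentiableAt ℝ U p := hU.differentiableAt two_ne_zero
  have d2U : DifferentiableAt ℝ (fderiv ℝ U) p :=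
    (hU.fderiv_right (m := 1) le_rfl).differentiableAt one_ne_zero
  have dFU : DifferentiableAt ℝ (fun q => F (U q)) p := hF.comp p dU
  have d_inv : DifferentiableAt ℝ (fun q : ℝ × Space => q.1⁻¹) p := by
    fun_prop (disch := assumption)
  have h_symm := hU.isSymmSndFDerivAt (by simp)
  unfold morawetzDensity morawetzFlux eulerDeriv energyDensity gradSq dalembertian timeDeriv
    spaceDeriv
  simp (disch := first | assumption | fun_prop) only [div_eq_mul_inv, fderiv_fun_sub,
    fderiv_fun_add, fderiv_fun_mul, fderiv_fun_pow, fderiv_clm_apply, fderiv_fun_const,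
    Fin.sum_univ_three, add_apply, sub_apply, smul_apply, fderiv_comp_real_apply,
    fderiv_coord_apply]
  simp [fderiv_fst, h_symm.eq _ (1, 0),
    h_symm.eq (0, EuclideanSpace.single 1 1) (0, EuclideanSpace.single 0 1),
    h_symm.eq (0, EuclideanSpace.single 2 1) (0, EuclideanSpace.single 0 1),
    h_symm.eq (0, EuclideanSpace.single 2 1) (0, EuclideanSpace.single 1 1)]
  field_simp
  ring

end Densities

/-! ### Pointwise bounds inside the cone -/

section PointwiseBounds

variable {ι : Type*} [Fintype ι] [DecidableEq ι] {F : ℝ → ℝ}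

lemma gradSq_nonneg (U : ℝ × EuclideanSpace ℝ ι → ℝ) (p : ℝ × EuclideanSpace ℝ ι) :
    0 ≤ gradSq U p :=
  Finset.sum_nonneg fun _ _ => sq_nonneg _

lemma sq_eulerDeriv_le (U : ℝ × EuclideanSpace ℝ ι → ℝ) (p : ℝ × EuclideanSpace ℝ ι) :
    eulerDeriv U p ^ 2 ≤ ‖p.2‖ ^ 2 * gradSq U p := by
  rw [EuclideanSpace.real_norm_sq_eq]
  exact Finset.sum_mul_sq_le_sq_mul_sq _ _ _

lemma energyDensity_nonneg {U : ℝ × EuclideanSpace ℝ ι → ℝ} {p : ℝ × EuclideanSpace ℝ ι}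
    (hF : 0 ≤ F (U p)) : 0 ≤ energyDensity F U p := by
  have := gradSq_nonneg U p
  unfold energyDensity
  positivity

lemma le_energyDensity (U : ℝ × EuclideanSpace ℝ ι → ℝ) (p : ℝ × EuclideanSpace ℝ ι) :
    F (U p) ≤ energyDensity F U p := by
  have := gradSq_nonneg U p
  exact le_add_of_nonneg_left (by positivity)

lemma abs_timeDeriv_mul_eulerDeriv_le {U : ℝ × EuclideanSpace ℝ ι → ℝ}
    {p : ℝ × EuclideanSpace ℝ ι} (hF : 0 ≤ F (U p)) :
    |timeDeriv U p * eulerDeriv U p| ≤ ‖p.2‖ * energyDensity F U p := by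
  have h_grad := gradSq_nonneg U p
  have h_euler : |eulerDeriv U p| ≤ ‖p.2‖ * √(gradSq U p) := by
    refine Real.abs_le_sqrt (sq_eulerDeriv_le U p) |>.trans_eq ?_
    rw [Real.sqrt_mul (sq_nonneg _), Real.sqrt_sq (norm_nonneg _)]
  calc |timeDeriv U p * eulerDeriv U p|
      ≤ |timeDeriv U p| * (‖p.2‖ * √(gradSq U p)) := by rw [abs_mul]; gcongr
    _ = ‖p.2‖ * (2 * |timeDeriv U p| * √(gradSq U p) / 2) := by ring
    _ ≤ ‖p.2‖ * ((timeDeriv U p ^ 2 + gradSq U p) / 2) := by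
        have := two_mul_le_add_sq |timeDeriv U p| (√(gradSq U p))
        rw [sq_abs, Real.sq_sqrt h_grad] at this
        gcongr
    _ ≤ ‖p.2‖ * energyDensity F U p := by
        unfold energyDensity
        gcongr
        linarith

lemma sub_norm_mul_energyDensity_le_coneFlux {U : ℝ × EuclideanSpace ℝ ι → ℝ}
    {p : ℝ × EuclideanSpace ℝ ι} (hF : 0 ≤ F (U p)) :
    (p.1 - ‖p.2‖) * energyDensity F U p ≤ coneFlux F U p := by
  have := neg_le_of_abs_le (abs_timeDeriv_mul_eulerDeriv_le hF)
  unfold coneFlux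
  linarith

lemma coneFlux_le {U : ℝ × EuclideanSpace ℝ ι → ℝ} {p : ℝ × EuclideanSpace ℝ ι}
    (hF : 0 ≤ F (U p)) (hp : ‖p.2‖ ≤ p.1) :
    coneFlux F U p ≤ 2 * p.1 * energyDensity F U p := by
  have h_cross := le_of_abs_le (abs_timeDeriv_mul_eulerDeriv_le hF)
  have h_radius := mul_le_mul_of_nonneg_right hp (energyDensity_nonneg hF)
  unfold coneFlux
  linarith

lemma coneFlux_nonneg {U : ℝ × EuclideanSpace ℝ ι → ℝ} {p : ℝ × EuclideanSpace ℝ ι}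
    (hF : 0 ≤ F (U p)) (hp : ‖p.2‖ ≤ p.1) : 0 ≤ coneFlux F U p :=
  (mul_nonneg (sub_nonneg.2 hp) (energyDensity_nonneg hF)).trans
    (sub_norm_mul_energyDensity_le_coneFlux hF)

lemma sq_sub_mul_energyDensity_le {U : ℝ × EuclideanSpace ℝ ι → ℝ}
    {p : ℝ × EuclideanSpace ℝ ι} (hF : 0 ≤ F (U p)) (hp : ‖p.2‖ ≤ p.1) :
    (p.1 ^ 2 - ‖p.2‖ ^ 2) * energyDensity F U p ≤ 2 * (p.1 * coneFlux F U p) :=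
  calc (p.1 ^ 2 - ‖p.2‖ ^ 2) * energyDensity F U p
      = (p.1 + ‖p.2‖) * ((p.1 - ‖p.2‖) * energyDensity F U p) := by ring
    _ ≤ (2 * p.1) * coneFlux F U p := by
        have h_flux := sub_norm_mul_energyDensity_le_coneFlux hF
        have := norm_nonneg p.2
        refine mul_le_mul (by linarith) h_flux ?_ (by linarith)
        exact mul_nonneg (sub_nonneg.2 hp) (energyDensity_nonneg hF)
    _ = 2 * (p.1 * coneFlux F U p) := by ring

lemma mul_coneFlux (F : ℝ → ℝ) (U : ℝ × EuclideanSpace ℝ ι → ℝ)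
    (p : ℝ × EuclideanSpace ℝ ι) :
    p.1 * coneFlux F U p = (p.1 * timeDeriv U p + eulerDeriv U p) ^ 2 / 2
      + (p.1 ^ 2 * gradSq U p - eulerDeriv U p ^ 2) / 2 + p.1 ^ 2 * F (U p) := by
  unfold coneFlux energyDensity
  ring

lemma sq_eulerDeriv_le_of_norm_le (U : ℝ × EuclideanSpace ℝ ι → ℝ)
    {p : ℝ × EuclideanSpace ℝ ι} (hp : ‖p.2‖ ≤ p.1) :
    eulerDeriv U p ^ 2 ≤ p.1 ^ 2 * gradSq U p :=
  (sq_eulerDeriv_le U p).trans <| mul_le_mul_of_nonneg_right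
    (pow_le_pow_left₀ (norm_nonneg _) hp 2) (gradSq_nonneg U p)

lemma mul_morawetzDensity (F : ℝ → ℝ) (U : ℝ × Space → ℝ) {p : ℝ × Space} (hp : p.1 ≠ 0) :
    p.1 * morawetzDensity F U p = (p.1 * timeDeriv U p + eulerDeriv U p + U p) ^ 2 / 2
      + (p.1 ^ 2 * gradSq U p - eulerDeriv U p ^ 2) / 2 + p.1 ^ 2 * F (U p) + U p ^ 2 := by
  unfold morawetzDensity energyDensity
  field_simp
  ring

lemma mul_morawetzDensity_add_flux (F : ℝ → ℝ) (U : ℝ × Space → ℝ) {p : ℝ × Space}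
    (hp : p.1 ≠ 0) :
    p.1 * morawetzDensity F U p + ∑ i, p.2 i * morawetzFlux F U i p =
      (p.1 * timeDeriv U p + eulerDeriv U p + U p) ^ 2
      + (p.1 ^ 2 - ‖p.2‖ ^ 2) * (gradSq U p / 2 + F (U p) + (U p * p.1⁻¹) ^ 2
        - (timeDeriv U p + U p * p.1⁻¹) ^ 2 / 2) := by
  unfold morawetzDensity morawetzFlux energyDensity gradSq eulerDeriv
  simp only [EuclideanSpace.real_norm_sq_eq, Fin.sum_univ_three]
  field_simp
  ring

lemma mul_le_morawetzDensity (F : ℝ → ℝ) (U : ℝ × Space → ℝ) {p : ℝ × Space} (hp₀ : 0 < p.1)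
    (hp : ‖p.2‖ ≤ p.1) : p.1 * F (U p) ≤ morawetzDensity F U p := by
  refine le_of_mul_le_mul_left ?_ hp₀
  rw [mul_morawetzDensity F U hp₀.ne']
  nlinarith [sq_eulerDeriv_le_of_norm_le U hp, sq_nonneg (U p),
    sq_nonneg (p.1 * timeDeriv U p + eulerDeriv U p + U p)]

lemma sq_le_young {t h : ℝ} (ht : 0 < t) (hh : 0 < h) (v : ℝ) :
    v ^ 2 ≤ (t / h) ^ 2 * v ^ 6 + h / t := by
  have h_scaled : ∀ y : ℝ, 0 ≤ y → y ≤ y ^ 3 + 1 := fun y hy => by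
    nlinarith [mul_nonneg hy (sq_nonneg (y - 1))]
  calc v ^ 2 = h / t * (t / h * v ^ 2) := by field_simp
    _ ≤ h / t * ((t / h * v ^ 2) ^ 3 + 1) := by
        gcongr
        exact h_scaled _ (by positivity)
    _ = (t / h) ^ 2 * v ^ 6 + h / t := by field_simp

end PointwiseBounds

/-- A `C¹` potential of at least sextic growth, `κ v⁶ ≤ F(v)`, whose nonlinearity `F'` satisfies
the superconformal condition `4F(v) ≤ v F'(v)` that gives the Morawetz charge a favourable sign. -/
structure IsCoercivePotential (κ : ℝ) (F : ℝ → ℝ) : Prop where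
  contDiff : ContDiff ℝ 1 F
  pos : 0 < κ
  le_apply : ∀ v, κ * v ^ 6 ≤ F v
  four_mul_le : ∀ v, 4 * F v ≤ v * deriv F v

namespace IsCoercivePotential

variable {κ h : ℝ} {F : ℝ → ℝ} {U : ℝ × Space → ℝ} {p : ℝ × Space}

lemma nonneg (hF : IsCoercivePotential κ F) (v : ℝ) : 0 ≤ F v := by
  have := hF.pos
  exact (by positivity : 0 ≤ κ * v ^ 6).trans (hF.le_apply v)

lemma sq_le (hF : IsCoercivePotential κ F) {t : ℝ} (ht : 0 < t) (hh : 0 < h) (v : ℝ) :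
    v ^ 2 ≤ t ^ 2 * F v / (κ * h ^ 2) + h / t := by
  have hκ := hF.pos
  calc v ^ 2 ≤ (t / h) ^ 2 * v ^ 6 + h / t := sq_le_young ht hh v
    _ = t ^ 2 * (κ * v ^ 6) / (κ * h ^ 2) + h / t := by field_simp
    _ ≤ t ^ 2 * F v / (κ * h ^ 2) + h / t := by
        gcongr
        exact hF.le_apply v

lemma morawetzDensity_le (hF : IsCoercivePotential κ F) (hp₀ : 0 < p.1) (hp : ‖p.2‖ ≤ p.1)
    (hh : 0 < h) :
    morawetzDensity F U p ≤
      (6 + 3 / (κ * h ^ 2)) * p.1 * energyDensity F U p + 2 * h / p.1 ^ 2 := by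
  have hκ := hF.pos
  have h_nonneg := energyDensity_nonneg (hF.nonneg (U p))
  have h_flux : p.1 * morawetzDensity F U p ≤ 2 * (p.1 * coneFlux F U p) + 2 * U p ^ 2 := by
    rw [mul_morawetzDensity F U hp₀.ne', mul_coneFlux]
    have h_potential := mul_nonneg (sq_nonneg p.1) (hF.nonneg (U p))
    have h_euler := sq_eulerDeriv_le_of_norm_le U hp
    linarith [add_sq_le (a := p.1 * timeDeriv U p + eulerDeriv U p) (b := U p)]
  have h_energy : p.1 * coneFlux F U p ≤ 2 * p.1 ^ 2 * energyDensity F U p :=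
    (mul_le_mul_of_nonneg_left (coneFlux_le (hF.nonneg _) hp) hp₀.le).trans_eq (by ring)
  have h_sq : U p ^ 2 ≤ p.1 ^ 2 * energyDensity F U p / (κ * h ^ 2) + h / p.1 :=
    (hF.sq_le hp₀ hh _).trans (by gcongr; exact le_energyDensity U p)
  refine le_of_mul_le_mul_left ?_ hp₀
  calc p.1 * morawetzDensity F U p
      ≤ 2 * (2 * p.1 ^ 2 * energyDensity F U p)
          + 2 * (p.1 ^ 2 * energyDensity F U p / (κ * h ^ 2) + h / p.1) := by linarith
    _ ≤ p.1 ^ 2 * energyDensity F U p * (6 + 3 / (κ * h ^ 2)) + 2 * h / p.1 := by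
        have : 0 ≤ p.1 ^ 2 * energyDensity F U p * (2 + 1 / (κ * h ^ 2)) := by positivity
        linear_combination this
    _ = _ := by field_simp

lemma mul_morawetzDensity_add_flux_le (hF : IsCoercivePotential κ F) (hp₀ : 0 < p.1)
    (hp : ‖p.2‖ ≤ p.1) (hh : 0 < h) :
    p.1 * morawetzDensity F U p + ∑ i, p.2 i * morawetzFlux F U i p ≤
      p.1 * ((6 + 3 / (κ * h ^ 2)) * coneFlux F U p) + 3 * h / p.1 := by
  have hκ := hF.pos
  have hs : 0 ≤ p.1 ^ 2 - ‖p.2‖ ^ 2 :=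
    sub_nonneg.2 (pow_le_pow_left₀ (norm_nonneg _) hp 2)
  have h_potential := mul_nonneg (sq_nonneg p.1) (hF.nonneg (U p))
  have h_flux := mul_coneFlux F U p
  have h_euler := sq_eulerDeriv_le_of_norm_le U hp
  have h_sq : U p ^ 2 ≤ p.1 * coneFlux F U p / (κ * h ^ 2) + h / p.1 := by
    refine (hF.sq_le hp₀ hh _).trans ?_
    gcongr ?_ / _ + _
    linarith [sq_nonneg (p.1 * timeDeriv U p + eulerDeriv U p)]
  have h_interior : (p.1 ^ 2 - ‖p.2‖ ^ 2) * (gradSq U p / 2 + F (U p) + (U p * p.1⁻¹) ^ 2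
      - (timeDeriv U p + U p * p.1⁻¹) ^ 2 / 2) ≤ 2 * (p.1 * coneFlux F U p) + U p ^ 2 :=
    calc _ ≤ (p.1 ^ 2 - ‖p.2‖ ^ 2) * energyDensity F U p
          + p.1 ^ 2 * (U p * p.1⁻¹) ^ 2 := by
          unfold energyDensity
          nlinarith [mul_nonneg hs (sq_nonneg (timeDeriv U p + U p * p.1⁻¹)),
            mul_nonneg hs (sq_nonneg (timeDeriv U p)),
            mul_nonneg (sq_nonneg ‖p.2‖) (sq_nonneg (U p * p.1⁻¹))]
      _ = (p.1 ^ 2 - ‖p.2‖ ^ 2) * energyDensity F U p + U p ^ 2 := by field_simp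
      _ ≤ _ := by linarith [sq_sub_mul_energyDensity_le (hF.nonneg (U p)) hp]
  rw [mul_morawetzDensity_add_flux F U hp₀.ne']
  calc _ ≤ 6 * (p.1 * coneFlux F U p) + 3 * U p ^ 2 := by
        linarith [add_sq_le (a := p.1 * timeDeriv U p + eulerDeriv U p) (b := U p)]
    _ ≤ 6 * (p.1 * coneFlux F U p) + 3 * (p.1 * coneFlux F U p / (κ * h ^ 2) + h / p.1) := by
        gcongr
    _ = _ := by ring

end IsCoercivePotential

/-! ### Decay of the potential energy -/

section WaveSolution

variable {ι : Type*} [Fintype ι] [DecidableEq ι] {F : ℝ → ℝ} {I : Set ℝ} {ε : ℝ}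
  {U : ℝ × EuclideanSpace ℝ ι → ℝ}

/-- `U` is a `C²` solution of the wave equation `□U = -F'(U)` with potential `F` on `I × ℝⁿ`. -/
structure IsWaveSolutionOn (F : ℝ → ℝ) (I : Set ℝ) (U : ℝ × EuclideanSpace ℝ ι → ℝ) : Prop where
  contDiffOn : ContDiffOn ℝ 2 U (I ×ˢ univ)
  dalembertian_eq : ∀ t ∈ I, ∀ x, dalembertian U (t, x) = -deriv F (U (t, x))

lemma contDiffOn_gradSq (hI : IsOpen I) (hU : ContDiffOn ℝ 2 U (I ×ˢ univ)) :
    ContDiffOn ℝ 1 (gradSq U) (I ×ˢ univ) :=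
  ContDiffOn.sum fun i _ => (contDiffOn_spaceDeriv le_rfl hI hU i).pow 2

lemma contDiffOn_eulerDeriv (hI : IsOpen I) (hU : ContDiffOn ℝ 2 U (I ×ˢ univ)) :
    ContDiffOn ℝ 1 (eulerDeriv U) (I ×ˢ univ) :=
  ContDiffOn.sum fun i _ =>
    (by fun_prop : ContDiffOn ℝ 1 (fun p : ℝ × EuclideanSpace ℝ ι => p.2 i) _).mul
      (contDiffOn_spaceDeriv le_rfl hI hU i)

lemma contDiffOn_energyDensity (hI : IsOpen I) (hF : ContDiff ℝ 1 F)
    (hU : ContDiffOn ℝ 2 U (I ×ˢ univ)) : ContDiffOn ℝ 1 (energyDensity F U) (I ×ˢ univ) :=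
  ((((contDiffOn_timeDeriv le_rfl hI hU).pow 2).add (contDiffOn_gradSq hI hU)).div_const 2).add
    (hF.comp_contDiffOn (hU.of_le one_le_two))

lemma contDiffOn_coneFlux (hI : IsOpen I) (hF : ContDiff ℝ 1 F)
    (hU : ContDiffOn ℝ 2 U (I ×ˢ univ)) : ContDiffOn ℝ 1 (coneFlux F U) (I ×ˢ univ) :=
  (contDiffOn_fst.mul (contDiffOn_energyDensity hI hF hU)).add
    ((contDiffOn_timeDeriv le_rfl hI hU).mul (contDiffOn_eulerDeriv hI hU))

/-- The energy `E_w(t) = ∫ w e dx` of `U` inside the light cone, with the sharp cutoff replaced by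
`w = coneCutoff ε`. -/
def coneEnergy (ε : ℝ) (F : ℝ → ℝ) (U : ℝ × EuclideanSpace ℝ ι → ℝ) (t : ℝ) : ℝ :=
  ∫ x, coneCutoff ε (t, x) * energyDensity F U (t, x)

lemma coneEnergy_nonneg (hF : ∀ v, 0 ≤ F v) (t : ℝ) : 0 ≤ coneEnergy ε F U t :=
  integral_nonneg fun x => mul_nonneg (coneCutoff_nonneg (t, x)) (energyDensity_nonneg (hF _))

theorem hasDerivAt_coneEnergy {t : ℝ} (hε : 0 ≤ ε) (hI : IsOpen I) (hF : ContDiff ℝ 1 F)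
    (hU : IsWaveSolutionOn F I U) (ht : t ∈ I) :
    HasDerivAt (coneEnergy ε F U) (∫ x, 2 * (shellWeight ε (t, x) * coneFlux F U (t, x))) t := by
  have hU₂ := hU.contDiffOn
  refine (hasDerivAt_integral_coneCutoff_mul hε hI ht (contDiffOn_energyDensity hI hF hU₂)
    fun i => (contDiffOn_timeDeriv le_rfl hI hU₂).mul
      (contDiffOn_spaceDeriv le_rfl hI hU₂ i)).congr_deriv
        (integral_congr_ae <| .of_forall fun x => ?_)
  have h_div := divergence_energy (p := (t, x)) (hF.differentiable one_ne_zero _)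
    (hU₂.contDiffAt ((hI.prod isOpen_univ).mem_nhds ⟨ht, mem_univ x⟩))
  rw [hU.dalembertian_eq t ht, neg_add_cancel, mul_zero] at h_div
  simp only [coneFlux, eulerDeriv, Finset.mul_sum, mul_left_comm (timeDeriv U (t, x)), h_div,
    mul_zero, add_zero]

lemma deriv_coneEnergy_nonneg {t : ℝ} (hε : 0 ≤ ε) (hI : IsOpen I) (hF : ContDiff ℝ 1 F)
    (hF₀ : ∀ v, 0 ≤ F v) (hU : IsWaveSolutionOn F I U) (ht : t ∈ I) (ht₀ : 0 ≤ t) :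
    0 ≤ deriv (coneEnergy ε F U) t := by
  rw [(hasDerivAt_coneEnergy hε hI hF hU ht).deriv]
  refine integral_nonneg fun x => mul_nonneg zero_le_two ?_
  simpa using shellWeight_mul_le_shellWeight_mul hε ht₀
    fun hx => coneFlux_nonneg (U := U) (p := (t, x)) (hF₀ _) hx

theorem monotoneOn_coneEnergy (hε : 0 ≤ ε) (hI : IsOpen I) (h_convex : Convex ℝ I)
    (hI₀ : I ⊆ Ici 0) (hF : ContDiff ℝ 1 F) (hF₀ : ∀ v, 0 ≤ F v)
    (hU : IsWaveSolutionOn F I U) : MonotoneOn (coneEnergy ε F U) I := by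
  have h_deriv t (ht : t ∈ I) := hasDerivAt_coneEnergy hε hI hF hU ht
  exact monotoneOn_of_deriv_nonneg h_convex
    (fun t ht => (h_deriv t ht).continuousAt.continuousWithinAt)
    (fun t ht => (h_deriv t (interior_subset ht)).differentiableAt.differentiableWithinAt)
    fun t ht => deriv_coneEnergy_nonneg hε hI hF hF₀ hU (interior_subset ht)
      (hI₀ (interior_subset ht))

end WaveSolution

section Morawetz

variable {F : ℝ → ℝ} {I : Set ℝ} {κ h ε a t T : ℝ} {U : ℝ × Space → ℝ}

lemma continuous_superconformal_defect {X : Type*} [TopologicalSpace X] {h : X → ℝ}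
    (hF : ContDiff ℝ 1 F) (hh : Continuous h) :
    Continuous fun x => h x * deriv F (h x) - 4 * F (h x) :=
  (hh.mul ((hF.continuous_deriv le_rfl).comp hh)).sub
    ((hF.continuous.comp hh).const_mul 4)

lemma contDiffOn_morawetzDensity (hI : IsOpen I) (hI₀ : 0 ∉ I) (hF : ContDiff ℝ 1 F)
    (hU : ContDiffOn ℝ 2 U (I ×ˢ univ)) : ContDiffOn ℝ 1 (morawetzDensity F U) (I ×ˢ univ) := by
  have h_inv : ContDiffOn ℝ 1 (fun p : ℝ × Space => p.1⁻¹) (I ×ˢ univ) :=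
    contDiffOn_fst.inv fun p hp h_zero => hI₀ (h_zero ▸ hp.1)
  have hU₁ := hU.of_le one_le_two
  have h_time := contDiffOn_timeDeriv (m := 1) le_rfl hI hU
  have h_euler := contDiffOn_eulerDeriv hI hU
  have h_energy := contDiffOn_energyDensity hI hF hU
  unfold morawetzDensity
  fun_prop

lemma contDiffOn_morawetzFlux (hI : IsOpen I) (hI₀ : 0 ∉ I) (hF : ContDiff ℝ 1 F)
    (hU : ContDiffOn ℝ 2 U (I ×ˢ univ)) (i : Fin 3) :
    ContDiffOn ℝ 1 (morawetzFlux F U i) (I ×ˢ univ) := by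
  have h_inv : ContDiffOn ℝ 1 (fun p : ℝ × Space => p.1⁻¹) (I ×ˢ univ) :=
    contDiffOn_fst.inv fun p hp h_zero => hI₀ (h_zero ▸ hp.1)
  have hU₁ := hU.of_le one_le_two
  have : ContDiffOn ℝ 1 (fun p => F (U p)) (I ×ˢ univ) := hF.comp_contDiffOn hU₁
  have h_time := contDiffOn_timeDeriv (m := 1) le_rfl hI hU
  have h_space := contDiffOn_spaceDeriv (m := 1) le_rfl hI hU i
  have h_euler := contDiffOn_eulerDeriv hI hU
  have h_grad := contDiffOn_gradSq hI hU
  unfold morawetzFlux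
  fun_prop

/-- The Morawetz charge `∫ w Q dx` inside the light cone, with `w = coneCutoff ε` and
`Q = morawetzDensity F U`. -/
def coneCharge (ε : ℝ) (F : ℝ → ℝ) (U : ℝ × Space → ℝ) (t : ℝ) : ℝ :=
  ∫ x, coneCutoff ε (t, x) * morawetzDensity F U (t, x)

theorem hasDerivAt_coneCharge (hε : 0 ≤ ε) (hI : IsOpen I) (hI₀ : 0 ∉ I) (hF : ContDiff ℝ 1 F)
    (hU : IsWaveSolutionOn F I U) (ht : t ∈ I) :
    HasDerivAt (coneCharge ε F U)
      (∫ x, (2 * (shellWeight ε (t, x) *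
          (t * morawetzDensity F U (t, x) + ∑ i, x i * morawetzFlux F U i (t, x)))
        - coneCutoff ε (t, x) * (U (t, x) * deriv F (U (t, x)) - 4 * F (U (t, x))))) t := by
  have hU₂ := hU.contDiffOn
  refine (hasDerivAt_integral_coneCutoff_mul hε hI ht (contDiffOn_morawetzDensity hI hI₀ hF hU₂)
    (contDiffOn_morawetzFlux hI hI₀ hF hU₂)).congr_deriv
      (integral_congr_ae <| .of_forall fun x => ?_)
  beta_reduce
  rw [divergence_morawetz (fun h_zero => hI₀ (h_zero ▸ ht)) (hF.differentiable one_ne_zero _)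
    (hU₂.contDiffAt ((hI.prod isOpen_univ).mem_nhds ⟨ht, mem_univ x⟩)), hU.dalembertian_eq t ht]
  ring

theorem mul_integral_coneCutoff_mul_le_coneCharge (hε : 0 ≤ ε) (hI : IsOpen I) (hI₀ : 0 ∉ I)
    (hF : ContDiff ℝ 1 F) (hU : IsWaveSolutionOn F I U) (ht : t ∈ I) (ht₀ : 0 < t) :
    t * ∫ x, coneCutoff ε (t, x) * F (U (t, x)) ≤ coneCharge ε F U t := by
  have hU₂ := hU.contDiffOn
  have h_density := continuous_slice (contDiffOn_morawetzDensity hI hI₀ hF hU₂).continuousOn ht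
  have h_potential := hF.continuous.comp (continuous_slice hU₂.continuousOn ht)
  rw [← integral_const_mul]
  refine integral_mono ((integrable_coneCutoff_mul hε t h_potential).const_mul t)
    (integrable_coneCutoff_mul hε t h_density) fun x => ?_
  simp only [mul_left_comm t]
  exact coneCutoff_mul_le_coneCutoff_mul hε ht₀.le
    fun hx => mul_le_morawetzDensity F U (p := (t, x)) ht₀ hx

namespace IsCoercivePotential

lemma deriv_coneCharge_le (hF : IsCoercivePotential κ F) (hε : 0 < ε) (hI : IsOpen I)
    (hI₀ : 0 ∉ I) (hU : IsWaveSolutionOn F I U) (ht : t ∈ I) (ht₀ : 0 < t)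
    (hεt : 2 * ε ≤ t ^ 2) (hh : 0 < h) :
    deriv (coneCharge ε F U) t ≤
      t * ((6 + 3 / (κ * h ^ 2)) * deriv (coneEnergy ε F U) t) + 24 * Real.pi * h := by
  have hU₂ := hU.contDiffOn
  have h_flux := continuous_slice (contDiffOn_coneFlux hI hF.contDiff hU₂).continuousOn ht
  have h_density :=
    continuous_slice (contDiffOn_morawetzDensity hI hI₀ hF.contDiff hU₂).continuousOn ht
  have h_current i :=
    continuous_slice (contDiffOn_morawetzFlux hI hI₀ hF.contDiff hU₂ i).continuousOn ht
  have h_source := continuous_superconformal_defect hF.contDiff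
    (continuous_slice hU₂.continuousOn ht)
  have h_shell := integrable_shellWeight (ι := Fin 3) hε.le t
  have h_shell_flux := ((integrable_shellWeight_mul hε.le t h_flux).const_mul 2).const_mul
    (6 + 3 / (κ * h ^ 2)) |>.const_mul t
  rw [(hasDerivAt_coneCharge hε.le hI hI₀ hF.contDiff hU ht).deriv,
    (hasDerivAt_coneEnergy hε.le hI hF.contDiff hU ht).deriv]
  calc _ ≤ ∫ x, (t * ((6 + 3 / (κ * h ^ 2)) * (2 * (shellWeight ε (t, x) * coneFlux F U (t, x))))
          + 6 * h / t * shellWeight ε (t, x)) := by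
        refine integral_mono (((integrable_shellWeight_mul hε.le t (by fun_prop)).const_mul 2).sub
          (integrable_coneCutoff_mul hε.le t h_source)) (h_shell_flux.add (h_shell.const_mul _))
          fun x => ?_
        have h_superconformal := mul_nonneg (coneCutoff_nonneg (ε := ε) (t, x))
          (sub_nonneg.2 (hF.four_mul_le (U (t, x))))
        have h_boundary := shellWeight_mul_le_shellWeight_mul hε.le ht₀.le fun hx =>
          hF.mul_morawetzDensity_add_flux_le (U := U) (p := (t, x)) ht₀ hx hh
        linear_combination h_superconformal + 2 * h_boundary
    _ = t * ((6 + 3 / (κ * h ^ 2)) * ∫ x, 2 * (shellWeight ε (t, x) * coneFlux F U (t, x)))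
          + 6 * h / t * ∫ x : Space, shellWeight ε (t, x) := by
        rw [integral_add h_shell_flux (h_shell.const_mul _), integral_const_mul,
          integral_const_mul, integral_const_mul (6 * h / t)]
    _ ≤ _ + 6 * h / t * (4 * Real.pi * t) := by
        gcongr
        exact integral_shellWeight_le hε ht₀ hεt
    _ = _ := by
        congr 1
        field_simp
        ring

theorem coneCharge_le (hF : IsCoercivePotential κ F) (hε : 0 ≤ ε) (hI : IsOpen I)
    (hI₀ : 0 ∉ I) (hU : IsWaveSolutionOn F I U) (ht : t ∈ I) (ht₀ : 0 < t) (hh : 0 < h) :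
    coneCharge ε F U t ≤
      (6 + 3 / (κ * h ^ 2)) * t * coneEnergy ε F U t + 8 / 3 * Real.pi * h * t := by
  have hU₂ := hU.contDiffOn
  have h_density :=
    continuous_slice (contDiffOn_morawetzDensity hI hI₀ hF.contDiff hU₂).continuousOn ht
  have h_energy := (integrable_coneCutoff_mul hε t (continuous_slice
    (contDiffOn_energyDensity hI hF.contDiff hU₂).continuousOn ht)).const_mul
      ((6 + 3 / (κ * h ^ 2)) * t)
  have h_cutoff := integrable_coneCutoff (ι := Fin 3) hε t
  calc coneCharge ε F U t
      ≤ ∫ x, ((6 + 3 / (κ * h ^ 2)) * t * (coneCutoff ε (t, x) * energyDensity F U (t, x))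
          + 2 * h / t ^ 2 * coneCutoff ε (t, x)) := by
        refine integral_mono (integrable_coneCutoff_mul hε t h_density)
          (h_energy.add (h_cutoff.const_mul _)) fun x => ?_
        refine (coneCutoff_mul_le_coneCutoff_mul hε ht₀.le fun hx =>
          hF.morawetzDensity_le (U := U) (p := (t, x)) ht₀ hx hh).trans_eq ?_
        ring
    _ = (6 + 3 / (κ * h ^ 2)) * t * coneEnergy ε F U t
          + 2 * h / t ^ 2 * ∫ x : Space, coneCutoff ε (t, x) := by
        rw [integral_add h_energy (h_cutoff.const_mul _), integral_const_mul, integral_const_mul]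
        rfl
    _ ≤ _ + 2 * h / t ^ 2 * (4 / 3 * Real.pi * t ^ 3) := by
        gcongr
        exact integral_coneCutoff_le hε ht₀.le
    _ = _ := by
        congr 1
        field_simp
        ring

lemma monotoneOn_sub_coneCharge (hF : IsCoercivePotential κ F) (hε : 0 < ε) (hI : IsOpen I)
    (hI₀ : 0 ∉ I) (hU : IsWaveSolutionOn F I U) (ha : 0 < a) (hIcc : Icc a T ⊆ I)
    (hεa : 2 * ε ≤ a ^ 2) (hh : 0 < h) :
    MonotoneOn (fun t => (6 + 3 / (κ * h ^ 2)) * T * coneEnergy ε F U t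
      + 24 * Real.pi * h * t - coneCharge ε F U t) (Icc a T) := by
  have hκ := hF.pos
  have h_deriv t (ht : t ∈ Icc a T) :=
    (((hasDerivAt_coneEnergy hε.le hI hF.contDiff hU (hIcc ht)).differentiableAt.hasDerivAt
      |>.const_mul ((6 + 3 / (κ * h ^ 2)) * T)).add
        ((hasDerivAt_id t).const_mul (24 * Real.pi * h))).sub
          (hasDerivAt_coneCharge hε.le hI hI₀ hF.contDiff hU (hIcc ht)).differentiableAt.hasDerivAt
  refine monotoneOn_of_deriv_nonneg (convex_Icc a T)
    (fun t ht => (h_deriv t ht).continuousAt.continuousWithinAt)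
    (fun t ht => (h_deriv t (interior_subset ht)).differentiableAt.differentiableWithinAt)
    fun t ht => ?_
  replace ht := interior_subset ht
  have ht₀ := ha.trans_le ht.1
  have h_charge := hF.deriv_coneCharge_le hε hI hI₀ hU (hIcc ht) ht₀
    (hεa.trans (pow_le_pow_left₀ ha.le ht.1 2)) hh
  have h_energy : 0 ≤ (6 + 3 / (κ * h ^ 2)) * (T - t) * deriv (coneEnergy ε F U) t :=
    mul_nonneg (mul_nonneg (by positivity) (sub_nonneg.2 ht.2))
      (deriv_coneEnergy_nonneg hε.le hI hF.contDiff hF.nonneg hU (hIcc ht) ht₀.le)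
  refine le_of_le_of_eq ?_ (h_deriv t ht).deriv.symm
  linear_combination h_charge + h_energy

theorem integral_coneCutoff_mul_le (hF : IsCoercivePotential κ F) (hε : 0 < ε) (hI : IsOpen I)
    (hI₀ : 0 ∉ I) (hU : IsWaveSolutionOn F I U) (ha : 0 < a) (haT : a ≤ T)
    (hIcc : Icc a T ⊆ I) (hεa : 2 * ε ≤ a ^ 2) (hh : 0 < h) :
    ∫ x, coneCutoff ε (T, x) * F (U (T, x)) ≤
      (6 + 3 / (κ * h ^ 2)) *
          (a / T * coneEnergy ε F U a + (coneEnergy ε F U T - coneEnergy ε F U a))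
        + 24 * Real.pi * h := by
  have hT : 0 < T := ha.trans_le haT
  have h_final := mul_integral_coneCutoff_mul_le_coneCharge hε.le hI hI₀ hF.contDiff hU
    (hIcc (right_mem_Icc.2 haT)) hT
  have h_initial := hF.coneCharge_le hε.le hI hI₀ hU (hIcc (left_mem_Icc.2 haT)) ha hh
  have h_mono := hF.monotoneOn_sub_coneCharge hε hI hI₀ hU ha hIcc hεa hh
    (left_mem_Icc.2 haT) (right_mem_Icc.2 haT) haT
  have h_slack : 0 ≤ Real.pi * h * a := by positivity
  refine le_of_mul_le_mul_left ?_ hT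
  calc T * ∫ x, coneCutoff ε (T, x) * F (U (T, x))
      ≤ (6 + 3 / (κ * h ^ 2)) *
            (a * coneEnergy ε F U a + T * (coneEnergy ε F U T - coneEnergy ε F U a))
          + T * (24 * Real.pi * h) := by
        linear_combination h_final + h_initial + h_mono + (24 - 8 / 3) * h_slack
    _ = _ := by field_simp

end IsCoercivePotential

end Morawetz

/-! ### The loglog potential -/

section Potential

variable {c : ℝ}

lemma log_log_ten_add_sq_pos (v : ℝ) : 0 < Real.log (Real.log (10 + v ^ 2)) := by
  refine Real.log_pos ((Real.lt_log_iff_exp_lt (by positivity)).2 ?_)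
  linarith [Real.exp_one_lt_d9, sq_nonneg v]

lemma g_pos (c v : ℝ) : 0 < g c v := Real.rpow_pos_of_pos (log_log_ten_add_sq_pos v) c

lemma g_abs (c v : ℝ) : g c |v| = g c v := by rw [g, g, sq_abs]

lemma continuous_g (c : ℝ) : Continuous (g c) := by
  have h_log : Continuous fun v : ℝ => Real.log (10 + v ^ 2) :=
    Continuous.log (by fun_prop) fun v => by positivity
  refine (h_log.log fun v h_zero => ?_).rpow_const fun v => .inl (log_log_ten_add_sq_pos v).ne'
  simpa [h_zero] using log_log_ten_add_sq_pos v

lemma g_le_g (hc : 0 ≤ c) {v w : ℝ} (hvw : |v| ≤ |w|) : g c v ≤ g c w := by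
  have h_log : 0 < Real.log (10 + v ^ 2) := Real.log_pos (by linarith [sq_nonneg v])
  refine Real.rpow_le_rpow (log_log_ten_add_sq_pos v).le (Real.log_le_log h_log ?_) hc
  exact Real.log_le_log (by positivity) (by linarith [sq_le_sq.2 hvw])

lemma continuous_f (c : ℝ) : Continuous (f c) := (continuous_pow 5).mul (continuous_g c)

lemma mul_f_eq (c v : ℝ) : v * f c v = g c v * v ^ 6 := by
  unfold f
  ring

lemma hasDerivAt_Fpot (c v : ℝ) : HasDerivAt (Fpot c) (f c v) v :=
  (continuous_f c).integral_hasStrictDerivAt 0 v |>.hasDerivAt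

lemma deriv_Fpot (c : ℝ) : deriv (Fpot c) = f c := funext fun v => (hasDerivAt_Fpot c v).deriv

lemma contDiff_Fpot (c : ℝ) : ContDiff ℝ 1 (Fpot c) :=
  contDiff_one_iff_deriv.2
    ⟨fun v => (hasDerivAt_Fpot c v).differentiableAt, deriv_Fpot c ▸ continuous_f c⟩

lemma Fpot_zero (c : ℝ) : Fpot c 0 = 0 := intervalIntegral.integral_same

lemma Fpot_abs (c v : ℝ) : Fpot c |v| = Fpot c v := by
  rcases abs_choice v with hv | hv <;> rw [hv]
  have h_odd (s : ℝ) : f c (-s) = -f c s := by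
    unfold f g
    rw [neg_sq]
    ring
  have h_reflect := intervalIntegral.integral_comp_neg (a := 0) (b := v) (f c)
  simp only [neg_zero, h_odd, intervalIntegral.integral_neg] at h_reflect
  rw [Fpot, Fpot, intervalIntegral.integral_symm, ← h_reflect, neg_neg]

lemma integral_pow_five_mul (k v : ℝ) : ∫ s in (0 : ℝ)..v, s ^ 5 * k = k / 6 * v ^ 6 := by
  rw [intervalIntegral.integral_mul_const, integral_pow]
  norm_num
  ring

lemma le_Fpot (hc : 0 ≤ c) (v : ℝ) : g c 0 / 6 * v ^ 6 ≤ Fpot c v := by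
  rw [← Fpot_abs, ← Even.pow_abs (by decide), ← integral_pow_five_mul]
  refine intervalIntegral.integral_mono_on (abs_nonneg v)
    (Continuous.intervalIntegrable (by fun_prop) _ _) ((continuous_f c).intervalIntegrable _ _)
    fun s hs => ?_
  exact mul_le_mul_of_nonneg_left (g_le_g hc (by simp)) (pow_nonneg hs.1 5)

lemma Fpot_le (hc : 0 ≤ c) (v : ℝ) : Fpot c v ≤ g c v / 6 * v ^ 6 := by
  rw [← Fpot_abs, ← g_abs, ← Even.pow_abs (by decide), ← integral_pow_five_mul]
  refine intervalIntegral.integral_mono_on (abs_nonneg v)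
    ((continuous_f c).intervalIntegrable _ _) (Continuous.intervalIntegrable (by fun_prop) _ _)
    fun s hs => ?_
  refine mul_le_mul_of_nonneg_left (g_le_g hc ?_) (pow_nonneg hs.1 5)
  rw [abs_abs, abs_of_nonneg hs.1]
  exact hs.2

theorem isCoercivePotential_Fpot (hc : 0 ≤ c) : IsCoercivePotential (g c 0 / 6) (Fpot c) where
  contDiff := contDiff_Fpot c
  pos := div_pos (g_pos c 0) (by norm_num)
  le_apply := le_Fpot hc
  four_mul_le v := by
    have h_nonneg : 0 ≤ g c v * v ^ 6 := mul_nonneg (g_pos c v).le (by positivity)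
    rw [deriv_Fpot, mul_f_eq]
    linarith [Fpot_le hc v]

end Potential

/-! ### Classical solutions -/

section ClassicalSolutions

lemma norm_gradient_sq {ι : Type*} [Fintype ι] [DecidableEq ι] (h : EuclideanSpace ℝ ι → ℝ)
    (x : EuclideanSpace ℝ ι) :
    ‖gradient h x‖ ^ 2 = ∑ i, fderiv ℝ h x (EuclideanSpace.single i 1) ^ 2 := by
  simp [← (EuclideanSpace.basisFun ι ℝ).sum_sq_inner_left, inner_gradient_left]

/-- By the Baire category theorem: the closed sets of times at which `U` vanishes outside the ball
of radius `n` exhaust `I`. -/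
lemma exists_supportBoundedNear {E : Type*} [NormedAddCommGroup E] {I : Set ℝ}
    {U : ℝ × E → ℝ} (hI : IsOpen I) (hI' : I.Nonempty) (hU : ContinuousOn U (I ×ˢ univ))
    (h_supp : ∀ t ∈ I, HasCompactSupport fun x => U (t, x)) :
    ∃ t ∈ I, SupportBoundedNear t U := by
  have := hI.baireSpace
  have := hI'.to_subtype
  let vanishing (n : ℕ) : Set I := {t | ∀ x : E, n < ‖x‖ → U (t, x) = 0}
  have h_closed (n : ℕ) : IsClosed (vanishing n) := by
    simp only [vanishing, ofPred_forall]
    refine isClosed_iInter fun x => isClosed_iInter fun _ => isClosed_eq ?_ continuous_const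
    exact hU.comp_continuous (by fun_prop) fun t => ⟨t.2, mem_univ x⟩
  have h_cover : ⋃ n, vanishing n = univ := by
    refine eq_univ_of_forall fun t => mem_iUnion.2 ?_
    obtain ⟨R, hR⟩ := (h_supp t t.2).isCompact.isBounded.subset_closedBall 0
    obtain ⟨n, hn⟩ := exists_nat_ge R
    refine ⟨n, fun x hx => by_contra fun hne => hx.not_ge ?_⟩
    exact (mem_closedBall_zero_iff.1 (hR (subset_tsupport _ hne))).trans hn
  obtain ⟨n, t, ht⟩ := nonempty_interior_of_iUnion_of_closed h_closed h_cover
  refine ⟨t, t.2, n, ?_⟩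
  filter_upwards [hI.isOpenMap_subtype_val.image_mem_nhds (mem_interior_iff_mem_nhds.1 ht)]
  rintro _ ⟨s, hs, rfl⟩
  exact hs

lemma integral_Fpot_le_energy (c : ℝ) (u : ℝ → Space → ℝ) (t : ℝ) :
    ∫ x, Fpot c (u t x) ≤ energy c u t := by
  have h_time : 0 ≤ ∫ x, dt1 u t x ^ 2 := integral_nonneg fun x => sq_nonneg _
  have h_space : 0 ≤ ∫ x, ‖gradient (u t) x‖ ^ 2 := integral_nonneg fun x => sq_nonneg _
  unfold energy
  linarith

lemma energy_comp_sub_const (c : ℝ) (u : ℝ → Space → ℝ) (s t : ℝ) :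
    energy c (fun r => u (r - s)) t = energy c u (t - s) := by
  have h_time (x : Space) : dt1 (fun r => u (r - s)) t x = dt1 u (t - s) x :=
    deriv_comp_sub_const (f := fun r => u r x) ..
  simp only [energy, h_time]

namespace IsClassicalSol

variable {c E t : ℝ} {J : Set ℝ} {u : ℝ → Space → ℝ}

lemma comp_sub_const (hu : IsClassicalSol c J u) (s : ℝ) :
    IsClassicalSol c ((· - s) ⁻¹' J) fun t => u (t - s) where
  smooth := hu.smooth.comp (f := fun p : ℝ × Space => (p.1 - s, p.2)) (by fun_prop)
    fun _ hp => ⟨hp.1, mem_univ _⟩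
  compactSpt t ht := hu.compactSpt _ ht
  eqn t ht x := by
    have h_time (r : ℝ) : dt1 (fun t => u (t - s)) r x = dt1 u (r - s) x :=
      deriv_comp_sub_const (f := fun r => u r x) ..
    rw [dt2, funext h_time, deriv_comp_sub_const (f := fun r => dt1 u r x)]
    exact hu.eqn _ ht x

lemma contDiffOn_interior (hu : IsClassicalSol c J u) :
    ContDiffOn ℝ 2 (fun p : ℝ × Space => u p.1 p.2) (interior J ×ˢ univ) :=
  (hu.smooth.of_le (WithTop.coe_le_coe.2 le_top)).mono (prod_mono interior_subset subset_rfl)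

lemma dt1_eq (hu : IsClassicalSol c J u) (ht : t ∈ interior J) (x : Space) :
    dt1 u t x = timeDeriv (fun p => u p.1 p.2) (t, x) :=
  (hasDerivAt_slice (differentiableAt_of_slab two_ne_zero isOpen_interior
    hu.contDiffOn_interior ht x)).deriv

lemma fderiv_apply_single (hu : IsClassicalSol c J u) (ht : t ∈ interior J) (x : Space)
    (i : Fin 3) :
    fderiv ℝ (u t) x (EuclideanSpace.single i 1) = spaceDeriv i (fun p => u p.1 p.2) (t, x) :=
  fderiv_slice_apply (differentiableAt_of_slab two_ne_zero isOpen_interior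
    hu.contDiffOn_interior ht x) _

lemma dt2_eq (hu : IsClassicalSol c J u) (ht : t ∈ interior J) (x : Space) :
    dt2 u t x = timeDeriv (timeDeriv fun p => u p.1 p.2) (t, x) := by
  have h_nhds : (fun s => dt1 u s x) =ᶠ[𝓝 t] fun s => timeDeriv (fun p => u p.1 p.2) (s, x) := by
    filter_upwards [isOpen_interior.mem_nhds ht] with s hs using hu.dt1_eq hs x
  rw [dt2, h_nhds.deriv_eq]
  exact (hasDerivAt_slice (differentiableAt_of_slab one_ne_zero isOpen_interior
    (contDiffOn_timeDeriv le_rfl isOpen_interior hu.contDiffOn_interior) ht x)).deriv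

lemma lap_eq (hu : IsClassicalSol c J u) (ht : t ∈ interior J) (x : Space) :
    lap (u t) x = ∑ i, spaceDeriv i (spaceDeriv i fun p => u p.1 p.2) (t, x) := by
  simp only [lap, hu.fderiv_apply_single ht]
  refine Finset.sum_congr rfl fun i _ => fderiv_slice_apply (differentiableAt_of_slab one_ne_zero
    isOpen_interior (contDiffOn_spaceDeriv le_rfl isOpen_interior hu.contDiffOn_interior i)
      ht x) _

theorem isWaveSolutionOn (hu : IsClassicalSol c J u) :
    IsWaveSolutionOn (Fpot c) (interior J) fun p => u p.1 p.2 where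
  contDiffOn := hu.contDiffOn_interior
  dalembertian_eq t ht x := by
    rw [dalembertian, ← hu.dt2_eq ht, ← hu.lap_eq ht, deriv_Fpot]
    exact hu.eqn t (interior_subset ht) x

lemma continuous (hu : IsClassicalSol c J u) (ht : t ∈ J) : Continuous (u t) :=
  continuous_slice hu.smooth.continuousOn ht

lemma integrable_Fpot (hu : IsClassicalSol c J u) (ht : t ∈ J) :
    Integrable fun x => Fpot c (u t x) :=
  ((contDiff_Fpot c).continuous.comp (hu.continuous ht)).integrable_of_hasCompactSupport
    ((hu.compactSpt t ht).comp_left (Fpot_zero c))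

lemma integrable_fderiv_sq (hu : IsClassicalSol c J u) (ht : t ∈ interior J)
    (h_supp : SupportBoundedNear t fun p : ℝ × Space => u p.1 p.2) (v : ℝ × Space) :
    Integrable fun x => fderiv ℝ (fun p : ℝ × Space => u p.1 p.2) (t, x) v ^ 2 := by
  have h_cont := (contDiffOn_fderiv_apply (m := 1) le_rfl isOpen_interior
    hu.contDiffOn_interior v).continuousOn
  simp only [pow_two]
  exact integrable_slice (h_cont.mul h_cont) ht ((h_supp.fderiv_apply v).mul_right _)

lemma integrable_gradSq (hu : IsClassicalSol c J u) (ht : t ∈ interior J)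
    (h_supp : SupportBoundedNear t fun p : ℝ × Space => u p.1 p.2) :
    Integrable fun x => gradSq (fun p : ℝ × Space => u p.1 p.2) (t, x) :=
  integrable_finsetSum _ fun _ _ => hu.integrable_fderiv_sq ht h_supp _

lemma integrable_energyDensity (hu : IsClassicalSol c J u) (ht : t ∈ interior J)
    (h_supp : SupportBoundedNear t fun p : ℝ × Space => u p.1 p.2) :
    Integrable fun x => energyDensity (Fpot c) (fun p : ℝ × Space => u p.1 p.2) (t, x) :=
  (((hu.integrable_fderiv_sq ht h_supp _).add (hu.integrable_gradSq ht h_supp)).div_const 2).add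
    (hu.integrable_Fpot (interior_subset ht))

lemma energy_eq_integral_energyDensity (hu : IsClassicalSol c J u) (ht : t ∈ interior J)
    (h_supp : SupportBoundedNear t fun p : ℝ × Space => u p.1 p.2) :
    energy c u t = ∫ x, energyDensity (Fpot c) (fun p : ℝ × Space => u p.1 p.2) (t, x) := by
  have h_time := hu.integrable_fderiv_sq ht h_supp (1, 0)
  have h_grad := hu.integrable_gradSq ht h_supp
  simp only [energy, norm_gradient_sq, hu.dt1_eq ht, hu.fderiv_apply_single ht]
  have h_split := integral_add ((h_time.add h_grad).div_const 2)
    (hu.integrable_Fpot (interior_subset ht))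
  simp only [Pi.add_apply, integral_div, integral_add h_time h_grad] at h_split
  refine Eq.trans ?_ h_split.symm
  simp only [timeDeriv, gradSq]
  ring

lemma coneEnergy_le_energy {ε : ℝ} (hc : 0 ≤ c) (hu : IsClassicalSol c J u)
    (ht : t ∈ interior J)
    (h_supp : SupportBoundedNear t fun p : ℝ × Space => u p.1 p.2) :
    coneEnergy ε (Fpot c) (fun p => u p.1 p.2) t ≤ energy c u t := by
  have h_energy := hu.integrable_energyDensity ht h_supp
  rw [hu.energy_eq_integral_energyDensity ht h_supp]
  have h_nonneg (x : Space) := energyDensity_nonneg (U := fun p : ℝ × Space => u p.1 p.2)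
    (p := (t, x)) ((isCoercivePotential_Fpot hc).nonneg _)
  refine integral_mono_of_nonneg
    (.of_forall fun x => mul_nonneg (coneCutoff_nonneg (t, x)) (h_nonneg x)) h_energy
    (.of_forall fun x => mul_le_of_le_one_left (h_nonneg x) (coneCutoff_le_one (t, x)))

lemma coneEnergy_le {ε : ℝ} (hc : 0 ≤ c) (hu : IsClassicalSol c J u)
    (hE : ∀ t ∈ interior J, energy c u t ≤ E) (ht : t ∈ interior J) (hε : 0 ≤ ε) :
    coneEnergy ε (Fpot c) (fun p => u p.1 p.2) t ≤ E := by
  by_contra! h_lt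
  have h_cont : ContinuousOn (coneEnergy ε (Fpot c) fun p => u p.1 p.2) (interior J) :=
    fun s hs => (hasDerivAt_coneEnergy hε isOpen_interior (contDiff_Fpot c)
      hu.isWaveSolutionOn hs).continuousAt.continuousWithinAt
  obtain ⟨s, ⟨hs, hs_lt⟩, h_supp⟩ := exists_supportBoundedNear
    (h_cont.isOpen_inter_preimage isOpen_interior isOpen_Ioi) ⟨t, ht, h_lt⟩
    (hu.contDiffOn_interior.continuousOn.mono (prod_mono inter_subset_left subset_rfl))
    fun s hs => hu.compactSpt s (interior_subset hs.1)
  exact hs_lt.not_ge ((hu.coneEnergy_le_energy hc hs h_supp).trans (hE s hs))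

end IsClassicalSol

end ClassicalSolutions

/-! ### Pigeonhole over scales -/

section Pigeonhole

lemma exists_sub_le_div_of_scales {e : ℝ → ℝ} {A B s b : ℝ} (hA : 1 < A) (hs : 0 < s)
    (h_len : s * A ^ (4 * A) ≤ b) (he₀ : ∀ t ∈ Ioo s b, 0 ≤ e t) (he : ∀ t ∈ Ioo s b, e t ≤ B) :
    ∃ a, s < a ∧ a * A ^ 2 < b ∧ e (a * A ^ 2) - e a ≤ B / A := by
  have hA₀ : 0 < A := zero_lt_one.trans hA
  set N := ⌈A⌉₊
  have hAN : A ≤ N := Nat.le_ceil A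
  have hN : (N : ℝ) < A + 1 := Nat.ceil_lt_add_one hA₀.le
  let scale (j : ℕ) : ℝ := s * A ^ (2 * A - N + 2 * (j : ℝ))
  have h_succ (j : ℕ) : scale (j + 1) = scale j * A ^ 2 := by
    simp only [scale]
    rw [mul_assoc, ← Real.rpow_natCast A 2, ← Real.rpow_add hA₀]
    push_cast
    ring_nf
  have h_mem (j : ℕ) (hj : j ≤ N) : scale j ∈ Ioo s b := by
    have hj' : (j : ℝ) ≤ N := Nat.cast_le.2 hj
    refine ⟨lt_mul_of_one_lt_right hs (Real.one_lt_rpow hA (by linarith [j.cast_nonneg (α := ℝ)])),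
      (mul_lt_mul_of_pos_left (Real.rpow_lt_rpow_of_exponent_lt hA ?_) hs).trans_le h_len⟩
    linarith
  have h_sum : ∑ j ∈ Finset.range N, (e (scale (j + 1)) - e (scale j)) ≤
      ∑ _j ∈ Finset.range N, B / A := by
    rw [Finset.sum_range_sub (fun j => e (scale j)), Finset.sum_const, Finset.card_range,
      nsmul_eq_mul, ← mul_div_assoc, le_div_iff₀ hA₀]
    have h_first := he₀ _ (h_mem 0 N.zero_le)
    have h_last := he₀ _ (h_mem N le_rfl)
    have h_bound := he _ (h_mem N le_rfl)
    nlinarith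
  obtain ⟨j, hj, h_le⟩ := Finset.exists_le_of_sum_le
    (Finset.nonempty_range_iff.2 (Nat.ceil_pos.2 hA₀).ne') h_sum
  have h_next := h_mem (j + 1) (Finset.mem_range.1 hj)
  rw [h_succ] at h_le h_next
  exact ⟨scale j, (h_mem j (Finset.mem_range.1 hj).le).1, h_next.2, h_le⟩

end Pigeonhole

/-! ### Smallness on a long truncation -/

/-- The bound obtained for the potential energy in the cone, in units of `η⁶`, when the potential
has coercivity constant `κ`. -/
def smallnessConstant (κ : ℝ) : ℝ := 18 + 9 / κ + 24 * Real.pi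

namespace IsCoercivePotential

variable {κ ε η s a b t A B T : ℝ} {F : ℝ → ℝ} {I : Set ℝ} {U : ℝ × Space → ℝ} {w h : Space → ℝ}

lemma le_smallnessConstant (hF : IsCoercivePotential κ F) : 18 ≤ smallnessConstant κ := by
  have hκ := hF.pos
  have h_rest : 0 ≤ 9 / κ + 24 * Real.pi := by positivity
  unfold smallnessConstant
  linarith

/- The auxiliary length `h = η⁶` balances the energy terms, of size `η¹⁸ / h²`, against the error
term, of size `h`. -/
theorem integral_coneCutoff_mul_le_pow (hF : IsCoercivePotential κ F) (hε : 0 < ε)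
    (hI : IsOpen I) (hI₀ : 0 ∉ I) (hU : IsWaveSolutionOn F I U) (ha : 0 < a) (haT : a ≤ T)
    (hIcc : Icc a T ⊆ I) (hεa : 2 * ε ≤ a ^ 2) (haA : a * A ≤ 2 * T)
    (hη : 0 < η) (hη₁ : η ≤ 1) (h_energy : coneEnergy ε F U a ≤ A * η ^ 18)
    (h_increment : coneEnergy ε F U T - coneEnergy ε F U a ≤ η ^ 18) :
    ∫ x, coneCutoff ε (T, x) * F (U (T, x)) ≤ smallnessConstant κ * η ^ 6 := by
  have hκ := hF.pos
  have h_ratio : a / T * coneEnergy ε F U a ≤ 2 * η ^ 18 :=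
    calc a / T * coneEnergy ε F U a ≤ a / T * (A * η ^ 18) :=
          mul_le_mul_of_nonneg_left h_energy (div_nonneg ha.le (ha.trans_le haT).le)
      _ = a * A / T * η ^ 18 := by ring
      _ ≤ 2 * η ^ 18 :=
          mul_le_mul_of_nonneg_right ((div_le_iff₀ (ha.trans_le haT)).2 haA) (by positivity)
  calc ∫ x, coneCutoff ε (T, x) * F (U (T, x))
      ≤ (6 + 3 / (κ * (η ^ 6) ^ 2)) * (2 * η ^ 18 + η ^ 18) + 24 * Real.pi * η ^ 6 := by
        refine (hF.integral_coneCutoff_mul_le hε hI hI₀ hU ha haT hIcc hεa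
          (by positivity : 0 < η ^ 6)).trans ?_
        gcongr
    _ = 18 * η ^ 18 + (9 / κ + 24 * Real.pi) * η ^ 6 := by
        field_simp
        ring
    _ ≤ 18 * η ^ 6 + (9 / κ + 24 * Real.pi) * η ^ 6 := by
        gcongr ?_ + _
        exact mul_le_mul_of_nonneg_left (pow_le_pow_of_le_one hη.le hη₁ (by norm_num))
          (by norm_num)
    _ = smallnessConstant κ * η ^ 6 := by
        unfold smallnessConstant
        ring

theorem exists_integral_coneCutoff_mul_le_pow (hF : IsCoercivePotential κ F) (hs : 0 < s)
    (hA : 1 < A) (h_len : s * A ^ (4 * A) ≤ b) (hU : IsWaveSolutionOn F (Ioo (2 * s) (b + s)) U)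
    (hη : 0 < η) (hη₁ : η ≤ 1)
    (h_energy : ∀ t ∈ Ioo (2 * s) (b + s), coneEnergy (s ^ 2) F U t ≤ A * η ^ 18) :
    ∃ a, s < a ∧ a * A ^ 2 < b ∧ ∀ T ∈ Icc (a * A) (a * A ^ 2),
      ∫ x, coneCutoff (s ^ 2) (T + s, x) * F (U (T + s, x)) ≤ smallnessConstant κ * η ^ 6 := by
  have h_shift {t : ℝ} (ht : t ∈ Ioo s b) : t + s ∈ Ioo (2 * s) (b + s) :=
    ⟨by linarith [ht.1], by linarith [ht.2]⟩
  obtain ⟨a, hsa, hab, h_le⟩ := exists_sub_le_div_of_scales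
    (e := fun t => coneEnergy (s ^ 2) F U (t + s)) hA hs h_len
    (fun t _ => coneEnergy_nonneg hF.nonneg _) fun t ht => h_energy _ (h_shift ht)
  refine ⟨a, hsa, hab, fun T hT => ?_⟩
  have ha : 0 < a := hs.trans hsa
  have haT : a ≤ T := (le_mul_of_one_le_right ha.le hA.le).trans hT.1
  have hTb : T < b := hT.2.trans_lt hab
  have h_mono := monotoneOn_coneEnergy (sq_nonneg s) isOpen_Ioo (convex_Ioo _ _)
    (fun t ht => (by linarith [ht.1] : 0 ≤ t)) hF.contDiff hF.nonneg hU
    (h_shift ⟨hsa.trans_le haT, hTb⟩) (h_shift ⟨(hsa.trans_le haT).trans_le hT.2, hab⟩)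
    (by linarith [hT.2])
  rw [mul_div_cancel_left₀ _ (by linarith)] at h_le
  refine hF.integral_coneCutoff_mul_le_pow (a := a + s) (by positivity) isOpen_Ioo
    (fun h_mem => by linarith [h_mem.1]) hU (by positivity) (by linarith) (fun t ht => ?_)
    (by nlinarith) (by nlinarith [hT.1]) hη hη₁
    (h_energy _ (h_shift ⟨hsa, haT.trans_lt hTb⟩)) (by linarith)
  exact ⟨by linarith [ht.1], by linarith [ht.2]⟩

lemma mul_integral_ball_le (hF : IsCoercivePotential κ F) (hw₀ : ∀ x, 0 ≤ w x)
    (hw : ∀ x ∈ Metric.ball 0 t, w x = 1) (h_int : Integrable fun x => w x * F (h x)) :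
    κ * ∫ x in Metric.ball 0 t, |h x| ^ (6 : ℝ) ≤ ∫ x, w x * F (h x) := by
  have h_nonneg (x : Space) := mul_nonneg (hw₀ x) (hF.nonneg (h x))
  rw [← integral_const_mul]
  refine (integral_mono_of_nonneg (.of_forall fun x => mul_nonneg hF.pos.le (by positivity))
    h_int.integrableOn ?_).trans (setIntegral_le_integral h_int (.of_forall h_nonneg))
  filter_upwards [ae_restrict_mem Metric.isOpen_ball.measurableSet] with x hx
  have h_pow : |h x| ^ (6 : ℝ) = h x ^ 6 := by
    rw [← Even.pow_abs (by decide)]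
    exact mod_cast Real.rpow_natCast |h x| 6
  simpa [hw x hx, h_pow] using hF.le_apply (h x)

theorem lxConeNorm_le (hF : IsCoercivePotential κ F) (hw₀ : ∀ x, 0 ≤ w x)
    (hw : ∀ x ∈ Metric.ball 0 t, w x = 1) (h_int : Integrable fun x => w x * F (h x))
    (hB : 0 ≤ B) (hη : 0 ≤ η) (h_le : ∫ x, w x * F (h x) ≤ B * η ^ 6) :
    LxConeNorm 6 t h ≤ (B / κ) ^ (1 / 6 : ℝ) * η := by
  have h_ball : ∫ x in Metric.ball 0 t, |h x| ^ (6 : ℝ) ≤ B / κ * η ^ 6 := by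
    rw [div_mul_eq_mul_div, le_div_iff₀' hF.pos]
    exact (hF.mul_integral_ball_le hw₀ hw h_int).trans h_le
  calc LxConeNorm 6 t h ≤ (B / κ * η ^ 6) ^ (1 / 6 : ℝ) :=
        Real.rpow_le_rpow (integral_nonneg fun x => by positivity) h_ball (by norm_num)
    _ = (B / κ) ^ (1 / 6 : ℝ) * (η ^ 6) ^ (1 / 6 : ℝ) :=
        Real.mul_rpow (div_nonneg hB hF.pos.le) (by positivity)
    _ = (B / κ) ^ (1 / 6 : ℝ) * η := by
        rw [one_div, show (6 : ℝ)⁻¹ = ((6 : ℕ) : ℝ)⁻¹ by norm_num,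
          Real.pow_rpow_inv_natCast hη (by norm_num)]

end IsCoercivePotential

/-- The constant of `potential_small_on_cone`. -/
def coneConstant (c : ℝ) : ℝ := (smallnessConstant (g c 0 / 6) / (g c 0 / 6)) ^ (1 / 6 : ℝ)

lemma coneConstant_pos {c : ℝ} (hc : 0 ≤ c) : 0 < coneConstant c := by
  have hF := isCoercivePotential_Fpot hc
  exact Real.rpow_pos_of_pos
    (div_pos (by linarith [hF.le_smallnessConstant]) hF.pos) _

namespace IsClassicalSol

variable {c t t₁ t₂ A η : ℝ} {J : Set ℝ} {u : ℝ → Space → ℝ}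

lemma lxConeNorm_le_of_energy_le (hc : 0 ≤ c) (hu : IsClassicalSol c J u) (ht : t ∈ J)
    (hη : 0 ≤ η) (hη₁ : η ≤ 1) (hE : energy c u t ≤ η ^ 18) :
    LxConeNorm 6 t (u t) ≤ coneConstant c * η := by
  have hF := isCoercivePotential_Fpot hc
  have hB := hF.le_smallnessConstant
  refine hF.lxConeNorm_le (w := fun _ => 1) (fun _ => zero_le_one) (fun _ _ => rfl)
    (by simpa using hu.integrable_Fpot ht) (by linarith) hη ?_
  simp only [one_mul]
  calc ∫ x, Fpot c (u t x) ≤ η ^ 18 := (integral_Fpot_le_energy c u t).trans hE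
    _ ≤ 1 * η ^ 6 := by
        rw [one_mul]
        exact pow_le_pow_of_le_one hη hη₁ (by norm_num)
    _ ≤ smallnessConstant (g c 0 / 6) * η ^ 6 := by
        gcongr
        linarith

/- Delaying `u` by `t₁` turns the cone `|x| < T` at time `T` into the region `t² - |x|² ≥ t₁²`,
where the smooth cutoff equals `1`, at time `t = T + t₁`. -/
theorem exists_lxConeNorm_le_of_one_lt (hc : 0 ≤ c) (hu : IsClassicalSol c (Icc t₁ t₂) u)
    (ht₁ : 0 < t₁) (hA : 1 < A) (h_len : t₁ * A ^ (4 * A) ≤ t₂)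
    (hE : ∀ t ∈ Icc t₁ t₂, energy c u t ≤ A * η ^ 18) (hη : 0 < η) (hη₁ : η ≤ 1) :
    ∃ a, t₁ < a ∧ a * A ^ 2 < t₂ ∧ ∀ T ∈ Icc (a * A) (a * A ^ 2),
      LxConeNorm 6 T (u T) ≤ coneConstant c * η := by
  have hF := isCoercivePotential_Fpot hc
  have hB := hF.le_smallnessConstant
  have hv := hu.comp_sub_const t₁
  rw [preimage_sub_const_Icc, ← two_mul] at hv
  have hv_energy (t : ℝ) (ht : t ∈ interior (Icc (2 * t₁) (t₂ + t₁))) :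
      energy c (fun r => u (r - t₁)) t ≤ A * η ^ 18 := by
    rw [energy_comp_sub_const]
    have ht' := interior_subset ht
    exact hE _ ⟨by linarith [ht'.1], by linarith [ht'.2]⟩
  have h_solution := hv.isWaveSolutionOn
  have h_coneEnergy (t : ℝ) (ht) := hv.coneEnergy_le hc hv_energy (t := t) ht (sq_nonneg t₁)
  rw [interior_Icc] at h_solution h_coneEnergy
  obtain ⟨a, ha, hab, h_small⟩ := hF.exists_integral_coneCutoff_mul_le_pow ht₁ hA h_len
    h_solution hη hη₁ h_coneEnergy
  refine ⟨a, ha, hab, fun T hT => ?_⟩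
  have h_le := h_small T hT
  simp only [add_sub_cancel_right] at h_le
  have haT : a ≤ T := (le_mul_of_one_le_right (ht₁.trans ha).le hA.le).trans hT.1
  have h_cont := (contDiff_Fpot c).continuous.comp
    (hu.continuous ⟨(ha.trans_le haT).le, (hT.2.trans_lt hab).le⟩)
  refine hF.lxConeNorm_le (fun x => coneCutoff_nonneg (T + t₁, x)) (fun x hx => ?_)
    (integrable_coneCutoff_mul (sq_nonneg t₁) (T + t₁) h_cont) (by linarith) hη.le h_le
  have hxT := pow_le_pow_left₀ (norm_nonneg x) (mem_ball_zero_iff.1 hx).le 2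
  exact coneCutoff_eq_one (by positivity) (by nlinarith)

theorem exists_lxConeNorm_le (hc : 0 ≤ c) (hu : IsClassicalSol c (Icc t₁ t₂) u)
    (ht₁ : 0 < t₁) (hA : 1 ≤ A) (h_len : t₁ * A ^ (4 * A) ≤ t₂)
    (hE : ∀ t ∈ Icc t₁ t₂, energy c u t ≤ A * η ^ 18) (hη : 0 < η) (hη₁ : η ≤ 1) :
    ∃ a, t₁ ≤ a ∧ a * A ≤ t₂ ∧ ∀ T ∈ Icc a (a * A), LxConeNorm 6 T (u T) ≤ coneConstant c * η := by
  rcases hA.eq_or_lt with rfl | hA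
  · have ht₁₂ : t₁ ≤ t₂ := by simpa using h_len
    refine ⟨t₁, le_rfl, by simpa using ht₁₂, fun T hT => ?_⟩
    obtain rfl : T = t₁ := by simpa using hT
    have ht := left_mem_Icc.2 ht₁₂
    exact hu.lxConeNorm_le_of_energy_le hc ht hη.le hη₁ (by simpa using hE _ ht)
  · obtain ⟨a, ha, hab, h_small⟩ := hu.exists_lxConeNorm_le_of_one_lt hc ht₁ hA h_len hE hη hη₁
    rw [pow_two, ← mul_assoc] at hab h_small
    exact ⟨a * A, (ha.trans (lt_mul_of_one_lt_right (ht₁.trans ha) hA)).le, hab.le, h_small⟩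

end IsClassicalSol

lemma energy_nonneg {c : ℝ} (hc : 0 ≤ c) (u : ℝ → Space → ℝ) (t : ℝ) : 0 ≤ energy c u t :=
  (integral_nonneg fun x => (isCoercivePotential_Fpot hc).nonneg (u t x)).trans
    (integral_Fpot_le_energy c u t)

lemma one_le_mul_rpow_neg {E p η : ℝ} (hE : 0 ≤ E) (hη : 0 < η) (hp : 0 < p)
    (h_le : η ≤ E ^ (1 / p)) : 1 ≤ E * η ^ (-p) := by
  rw [Real.rpow_neg hη.le, ← div_eq_mul_inv, one_le_div₀ (Real.rpow_pos_of_pos hη p)]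
  rwa [one_div, Real.le_rpow_inv_iff_of_pos hη.le hE hp] at h_le

theorem potential_small_on_cone_general (c : ℝ) (hc : 0 ≤ c) :
    ∃ C > (0:ℝ),
      ∀ (t₁ t₂ : ℝ) (u : ℝ → Space → ℝ) (E η : ℝ),
        0 < t₁ → t₁ ≤ t₂ →
        IsClassicalSol c (Set.Icc t₁ t₂) u →
        (∀ t ∈ Set.Icc t₁ t₂, energy c u t = E) →
        0 < η → η ≤ min 1 (E ^ ((1:ℝ)/18)) →
        Set.Icc t₁ (t₁ * (E * η ^ (-(18:ℝ))) ^ (4 * E * η ^ (-(18:ℝ)))) ⊆ Set.Icc t₁ t₂ →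
        ∃ t₁' t₂' : ℝ, 0 < t₁' ∧ Set.Icc t₁' t₂' ⊆ Set.Icc t₁ t₂ ∧
          t₂' / t₁' = E * η ^ (-(18:ℝ)) ∧
          (⨆ t ∈ Set.Icc t₁' t₂', LxConeNorm 6 t (u t)) ≤ C * η := by
  refine ⟨coneConstant c, coneConstant_pos hc, fun t₁ t₂ u E η ht₁ ht₁₂ hu hE hη hη_le h_sub => ?_⟩
  have hE₀ : 0 ≤ E := hE t₁ (left_mem_Icc.2 ht₁₂) ▸ energy_nonneg hc u t₁
  have hA := one_le_mul_rpow_neg hE₀ hη (by norm_num) (hη_le.trans (min_le_right _ _))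
  have h_mul : E * η ^ (-(18 : ℝ)) * η ^ 18 = E := by
    rw [mul_assoc, ← Real.rpow_natCast, ← Real.rpow_add hη]
    norm_num
  rw [mul_assoc 4] at h_sub
  set A := E * η ^ (-(18 : ℝ))
  have h_len := (h_sub (right_mem_Icc.2 (le_mul_of_one_le_right ht₁.le
    (Real.one_le_rpow hA (by positivity))))).2
  obtain ⟨a, ha, hab, h_small⟩ := hu.exists_lxConeNorm_le hc ht₁ hA h_len
    (fun t ht => (hE t ht).trans_le h_mul.ge) hη (hη_le.trans (min_le_left _ _))
  have hC : 0 ≤ coneConstant c * η := (mul_pos (coneConstant_pos hc) hη).le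
  exact ⟨a, a * A, ht₁.trans_le ha, Icc_subset_Icc ha hab,
    mul_div_cancel_left₀ A (ht₁.trans_le ha).ne',
    Real.iSup_le (fun t => Real.iSup_le (h_small t) hC) hC⟩

/-- Smallness of the potential on a dyadically long cone truncation. -/
theorem potential_small_on_cone (c : ℝ) (hc : 0 < c) (hc' : c < 8 / 225) :
    ∃ C > (0:ℝ),
      ∀ (t₁ t₂ : ℝ) (u : ℝ → Space → ℝ) (E M η : ℝ),
        0 < t₁ → t₁ ≤ t₂ →
        IsClassicalSol c (Set.Icc t₁ t₂) u →
        (∀ t ∈ Set.Icc t₁ t₂, energy c u t = E) →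
        (∀ t ∈ Set.Icc t₁ t₂, H2tildeNorm (u t) ≤ M) →
        0 < η → η ≤ min 1 (E ^ ((1:ℝ)/18)) →
        Set.Icc t₁ (t₁ * (E * η ^ (-(18:ℝ))) ^ (4 * E * η ^ (-(18:ℝ)))) ⊆ Set.Icc t₁ t₂ →
        ∃ t₁' t₂' : ℝ, 0 < t₁' ∧ Set.Icc t₁' t₂' ⊆ Set.Icc t₁ t₂ ∧
          t₂' / t₁' = E * η ^ (-(18:ℝ)) ∧
          (⨆ t ∈ Set.Icc t₁' t₂', LxConeNorm 6 t (u t)) ≤ C * η := by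
  obtain ⟨C, hC, h⟩ := potential_small_on_cone_general c hc.le
  exact ⟨C, hC, fun t₁ t₂ u E _ η ht₁ ht₁₂ hu hE _ => h t₁ t₂ u E η ht₁ ht₁₂ hu hE⟩
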